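/- arXiv:0807.1825 — 2 statements merged into one kernel-verified Lean document; each statement's English description precedes it below -/
import Mathlib

section
/- Let 0 < α < 2, d ≥ 1, and D = {x ∈ ℝ^d : x_d > 0}. The constant κ_{d,α} in the fractional Hardy inequality for D is optimal: for every constant K > κ_{d,α} there exists a continuous function u : ℝ^d → ℝ with compact support in D such that (1/2) ∫_D ∫_D (u(x) − u(y))² / |x − y|^{d+α} dx dy < K ∫_D u(x)² x_d^{−α} dx. -/
open MeasureTheory Real Set

/-- The Euler beta function. -/
noncomputable def eulerBeta (a b : ℝ) : ℝ := Real.Gamma a * Real.Gamma b / Real.Gamma (a + b)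

/-- The optimal fractional Hardy constant for the half-space in dimension `d`. -/
noncomputable def kappa (d : ℕ) (α : ℝ) : ℝ :=
  (Real.pi ^ (((d : ℝ) - 1) / 2) * Real.Gamma ((1 + α) / 2) / Real.Gamma ((α + d) / 2)) *
    ((eulerBeta ((1 + α) / 2) ((2 - α) / 2) - 2 ^ α) / (α * 2 ^ α))

/-- The open upper half-space in `ℝ^{d+1}`. -/
def halfSpace (d : ℕ) : Set (EuclideanSpace ℝ (Fin (d + 1))) :=
  {x | 0 < x (Fin.last d)}

/-!
Write `u = x_d ^ ((α - 1) / 2) * v`. The half-space is a group, a point `x` acting on it as the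
affine map `p ↦ x ⋆ p = x_d p + (horizontal part of x)`. Substituting `y = x ⋆ p` turns both sides
of the Hardy inequality into integrals in `x` against `dx / x_d`, which is invariant under
`x ↦ x ⋆ p` for each `p`. Invariance allows completing the square, and with `e` the upward unit
vector and `‖v‖` the norm of `v` in `L²(dx / x_d)` the double integral over `x` and `y` becomes
`2 κ ‖v‖² + ∫ ‖p - e‖ ^ (-(d + α)) * p_d ^ ((α - 1) / 2) * ‖v - v(· ⋆ p)‖² dp`,
where `2 κ = ∫ ‖p - e‖ ^ (-(d + α)) * (1 - p_d ^ ((α - 1) / 2))² dp` is computed by integrating out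
the horizontal variables. The group is solvable, hence amenable: cutoffs of logarithmic height `t`
and horizontal width `t eᵗ` are almost invariant under each translation, so the second term is
`o(‖v‖²)` as `t → ∞`.
-/

namespace FractionalHardy

open Filter Topology

section BetaIntegrals

variable {a b : ℝ}

lemma eulerBeta_pos (ha : 0 < a) (hb : 0 < b) : 0 < eulerBeta a b :=
  ProbabilityTheory.beta_pos ha hb

lemma rpow_mul_one_sub_rpow_nonneg {x : ℝ} (hx : x ∈ Ioo (0 : ℝ) 1) :
    0 ≤ x ^ a * (1 - x) ^ b :=
  mul_nonneg (rpow_nonneg hx.1.le _) (rpow_nonneg (sub_nonneg.2 hx.2.le) _)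

lemma lintegral_rpow_mul_one_sub_rpow (ha : 0 < a) (hb : 0 < b) :
    ∫⁻ x in Ioo (0 : ℝ) 1, ENNReal.ofReal (x ^ (a - 1) * (1 - x) ^ (b - 1)) =
      ENNReal.ofReal (eulerBeta a b) := by
  have hpos := eulerBeta_pos ha hb
  have hpdf : ∫⁻ x in Ioo (0 : ℝ) 1,
      ENNReal.ofReal (1 / eulerBeta a b * x ^ (a - 1) * (1 - x) ^ (b - 1)) = 1 :=
    ProbabilityTheory.lintegral_betaPDF.symm.trans
      (ProbabilityTheory.lintegral_betaPDF_eq_one ha hb)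
  calc ∫⁻ x in Ioo (0 : ℝ) 1, ENNReal.ofReal (x ^ (a - 1) * (1 - x) ^ (b - 1))
      = ∫⁻ x in Ioo (0 : ℝ) 1, ENNReal.ofReal (eulerBeta a b) *
          ENNReal.ofReal (1 / eulerBeta a b * x ^ (a - 1) * (1 - x) ^ (b - 1)) := by
        refine lintegral_congr fun x => ?_
        rw [← ENNReal.ofReal_mul hpos.le]
        congr 1
        field_simp
    _ = ENNReal.ofReal (eulerBeta a b) := by
        rw [lintegral_const_mul' _ _ ENNReal.ofReal_ne_top, hpdf, mul_one]

lemma integrableOn_rpow_mul_one_sub_rpow (ha : 0 < a) (hb : 0 < b) :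
    IntegrableOn (fun x : ℝ => x ^ (a - 1) * (1 - x) ^ (b - 1)) (Ioo 0 1) := by
  refine ⟨by fun_prop, ?_⟩
  rw [hasFiniteIntegral_iff_ofReal, lintegral_rpow_mul_one_sub_rpow ha hb]
  · exact ENNReal.ofReal_lt_top
  · filter_upwards [self_mem_ae_restrict measurableSet_Ioo] with x hx
    exact rpow_mul_one_sub_rpow_nonneg hx

lemma integral_rpow_mul_one_sub_rpow (ha : 0 < a) (hb : 0 < b) :
    ∫ x in Ioo (0 : ℝ) 1, x ^ (a - 1) * (1 - x) ^ (b - 1) = eulerBeta a b := by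
  rw [integral_eq_lintegral_of_nonneg_ae, lintegral_rpow_mul_one_sub_rpow ha hb,
    ENNReal.toReal_ofReal (eulerBeta_pos ha hb).le]
  · filter_upwards [self_mem_ae_restrict measurableSet_Ioo] with x hx
    exact rpow_mul_one_sub_rpow_nonneg hx
  · fun_prop

lemma lintegral_Ioi_one_eq_lintegral_Ioo_inv (f : ℝ → ENNReal) :
    ∫⁻ t in Ioi 1, f t = ∫⁻ t in Ioo 0 1, ENNReal.ofReal (t ^ 2)⁻¹ * f t⁻¹ := by
  have himage : (fun t : ℝ => t⁻¹) '' Ioo 0 1 = Ioi 1 := by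
    rw [image_inv_eq_inv, inv_Ioo_0_left (zero_lt_one' ℝ), inv_one]
  rw [← himage, lintegral_image_eq_lintegral_abs_deriv_mul measurableSet_Ioo
    (fun t ht => (hasDerivAt_inv ht.1.ne').hasDerivWithinAt) inv_injective.injOn]
  refine lintegral_congr fun t => ?_
  rw [abs_neg, abs_of_nonneg (inv_nonneg.2 (sq_nonneg t))]

lemma lintegral_Ioi_eq_lintegral_Ioo_add_inv {f : ℝ → ENNReal} (hf : Measurable f) :
    ∫⁻ t in Ioi 0, f t = ∫⁻ t in Ioo 0 1, (f t + ENNReal.ofReal (t ^ 2)⁻¹ * f t⁻¹) := by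
  rw [lintegral_add_left hf, ← lintegral_Ioi_one_eq_lintegral_Ioo_inv,
    ← Ioc_union_Ioi_eq_Ioi (zero_le_one' ℝ),
    lintegral_union measurableSet_Ioi Ioc_disjoint_Ioi_same, setLIntegral_congr Ioo_ae_eq_Ioc]

lemma abs_inv_sub_one {t : ℝ} (ht : t ∈ Ioo (0 : ℝ) 1) : |t⁻¹ - 1| = t⁻¹ * (1 - t) := by
  have : t⁻¹ - 1 = t⁻¹ * (1 - t) := by field_simp [ht.1.ne']
  rw [this, abs_of_pos (mul_pos (inv_pos.2 ht.1) (sub_pos.2 ht.2))]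

lemma abs_sub_one {t : ℝ} (ht : t ∈ Ioo (0 : ℝ) 1) : |t - 1| = 1 - t := by
  rw [abs_sub_comm, abs_of_pos (sub_pos.2 ht.2)]

lemma lintegral_rpow_mul_abs_sub_one_rpow (ha : 0 < a) (hb : 0 < b) (hab : a + b < 1) :
    ∫⁻ t in Ioi (0 : ℝ), ENNReal.ofReal (t ^ (a - 1) * |t - 1| ^ (b - 1)) =
      ENNReal.ofReal (eulerBeta a b + eulerBeta (1 - a - b) b) := by
  have hc : 0 < 1 - a - b := by linarith
  rw [lintegral_Ioi_eq_lintegral_Ioo_add_inv (by fun_prop),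
    ENNReal.ofReal_add (eulerBeta_pos ha hb).le (eulerBeta_pos hc hb).le,
    ← lintegral_rpow_mul_one_sub_rpow ha hb, ← lintegral_rpow_mul_one_sub_rpow hc hb,
    ← lintegral_add_left (by fun_prop)]
  refine setLIntegral_congr_fun measurableSet_Ioo fun t ht => ?_
  have ht0 := ht.1
  have hinv : (t ^ 2)⁻¹ * (t⁻¹ ^ (a - 1) * t⁻¹ ^ (b - 1)) = t ^ (1 - a - b - 1) := by
    rw [inv_rpow ht0.le, inv_rpow ht0.le, ← rpow_neg ht0.le, ← rpow_neg ht0.le,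
      ← rpow_natCast t 2, ← rpow_neg ht0.le, ← rpow_add ht0, ← rpow_add ht0]
    congr 1
    push_cast
    ring
  simp only [abs_sub_one ht, abs_inv_sub_one ht]
  rw [← ENNReal.ofReal_mul (by positivity),
    mul_rpow (inv_nonneg.2 ht0.le) (sub_nonneg.2 ht.2.le), ← mul_assoc (t⁻¹ ^ _),
    ← mul_assoc, hinv]

end BetaIntegrals

section HalfLine

variable {α t : ℝ}

lemma one_sub_rpow_sq_le_of_nonneg {b : ℝ} (hb0 : 0 ≤ b) (hb1 : b ≤ 1) (ht0 : 0 < t)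
    (ht1 : t ≤ 1) : (1 - t ^ b) ^ 2 ≤ (1 - t) ^ 2 := by
  have hle_one : t ^ b ≤ 1 := rpow_le_one ht0.le ht1 hb0
  have hself_le : t ≤ t ^ b := by simpa using rpow_le_rpow_of_exponent_ge ht0 ht1 hb1
  exact pow_le_pow_left₀ (by linarith) (by linarith) 2

lemma one_sub_rpow_sq_le {b : ℝ} (hb0 : -1 ≤ b) (hb1 : b ≤ 1) (ht0 : 0 < t) (ht1 : t ≤ 1) :
    (1 - t ^ b) ^ 2 ≤ (1 + t ^ (2 * b)) * (1 - t) ^ 2 := by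
  have hsq : t ^ (2 * b) = (t ^ b) ^ 2 := by rw [mul_comm, rpow_mul ht0.le, rpow_two]
  have hsq_nonneg : 0 ≤ (t ^ b) ^ 2 * (1 - t) ^ 2 := by positivity
  rw [hsq]
  rcases le_total 0 b with hb | hb
  · linarith [one_sub_rpow_sq_le_of_nonneg hb hb1 ht0 ht1]
  · have hinv : t ^ b * t ^ (-b) = 1 := by rw [← rpow_add ht0, add_neg_cancel, rpow_zero]
    calc (1 - t ^ b) ^ 2 = (t ^ b) ^ 2 * (1 - t ^ (-b)) ^ 2 := by
          rw [← mul_pow, mul_sub, hinv]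
          ring
      _ ≤ (t ^ b) ^ 2 * (1 - t) ^ 2 := by
          gcongr ?_ * ?_
          exact one_sub_rpow_sq_le_of_nonneg (neg_nonneg.2 hb) (by linarith) ht0 ht1
      _ ≤ (1 + (t ^ b) ^ 2) * (1 - t) ^ 2 := by linarith [sq_nonneg (1 - t)]

lemma one_sub_rpow_half_sq_le (hα0 : 0 < α) (hα2 : α < 2) (ht : t ∈ Ioo (0 : ℝ) 1) :
    (1 - t ^ ((α - 1) / 2)) ^ 2 ≤ (1 + t ^ (α - 1)) * (1 - t) ^ 2 := by
  convert one_sub_rpow_sq_le (b := (α - 1) / 2) (by linarith) (by linarith) ht.1 ht.2.le using 4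
  ring

lemma rpow_sub_one_eq_sq (ht : 0 < t) : t ^ (α - 1) = (t ^ ((α - 1) / 2)) ^ 2 := by
  rw [← rpow_mul_natCast ht.le, Nat.cast_ofNat, div_mul_cancel₀ _ two_ne_zero]

lemma rpow_eq_mul_sq (ht : 0 < t) : t ^ α = t * (t ^ ((α - 1) / 2)) ^ 2 := by
  rw [← rpow_sub_one_eq_sq ht, mul_comm, ← rpow_add_one ht.ne', sub_add_cancel]

lemma rpow_add_one_half (ht : 0 < t) : t ^ ((α + 1) / 2) = t * t ^ ((α - 1) / 2) := by
  rw [mul_comm, ← rpow_add_one ht.ne']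
  congr 1
  ring

lemma integrableOn_one_sub_rpow_sq_mul (hα0 : 0 < α) (hα2 : α < 2) :
    IntegrableOn (fun t : ℝ => (1 - t ^ ((α - 1) / 2)) ^ 2 * (1 - t) ^ (-1 - α)) (Ioo 0 1) := by
  have hβ : 0 < 2 - α := by linarith
  refine ((integrableOn_rpow_mul_one_sub_rpow one_pos hβ).add
    (integrableOn_rpow_mul_one_sub_rpow hα0 hβ)).mono' (by fun_prop) ?_
  filter_upwards [self_mem_ae_restrict measurableSet_Ioo] with t ht
  have h1t : 0 < 1 - t := sub_pos.2 ht.2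
  have hpow : (1 - t) ^ (2 - α - 1) = (1 - t) ^ (-1 - α) * (1 - t) ^ 2 := by
    rw [← rpow_add_natCast h1t.ne']
    congr 1
    push_cast
    ring
  rw [norm_of_nonneg (by positivity)]
  simp only [Pi.add_apply, sub_self, rpow_zero, hpow]
  calc (1 - t ^ ((α - 1) / 2)) ^ 2 * (1 - t) ^ (-1 - α)
      ≤ (1 + t ^ (α - 1)) * (1 - t) ^ 2 * (1 - t) ^ (-1 - α) := by
        gcongr
        exact one_sub_rpow_half_sq_le hα0 hα2 ht
    _ = _ := by ring

/-- A primitive on `(0, 1)` of `(1 - t ^ ((α - 1) / 2)) ^ 2 * (1 - t) ^ (-1 - α)`, up to a multiple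
of the integrand of the beta function at `((α + 1) / 2, 2 - α)`. -/
noncomputable def hardyPrimitive (α t : ℝ) : ℝ :=
  (1 - t) ^ (-α) * (1 + t ^ α - (3 - t) * t ^ ((α + 1) / 2)) / α

lemma hasDerivAt_hardyPrimitive (hα : α ≠ 0) (ht : t ∈ Ioo (0 : ℝ) 1) :
    HasDerivAt (hardyPrimitive α) ((1 - t ^ ((α - 1) / 2)) ^ 2 * (1 - t) ^ (-1 - α)
      - (3 - α) / (2 * α) * (t ^ ((α + 1) / 2 - 1) * (1 - t) ^ (2 - α - 1))) t := by
  have ht0 := ht.1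
  have h1t : 0 < 1 - t := sub_pos.2 ht.2
  have hpow (p : ℝ) : HasDerivAt (fun t : ℝ => t ^ p) (p * t ^ (p - 1)) t :=
    hasDerivAt_rpow_const (Or.inl ht0.ne')
  have hone_sub : HasDerivAt (fun t : ℝ => (1 - t) ^ (-α)) (-1 * -α * (1 - t) ^ (-α - 1)) t :=
    ((hasDerivAt_id t).const_sub 1).rpow_const (Or.inl h1t.ne')
  refine ((hone_sub.mul (((hpow α).const_add 1).sub
    (((hasDerivAt_id t).const_sub 3).mul (hpow ((α + 1) / 2))))).div_const α).congr_deriv ?_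
  have hhalf : t ^ ((α + 1) / 2 - 1) = t ^ ((α - 1) / 2) := by
    congr 1
    ring
  have hneg : (1 - t) ^ (-α - 1) = (1 - t) ^ (-1 - α) := by
    congr 1
    ring
  have hone : (1 - t) ^ (-α) = (1 - t) ^ (-1 - α) * (1 - t) := by
    rw [← rpow_add_one h1t.ne']
    congr 1
    ring
  have htwo : (1 - t) ^ (2 - α - 1) = (1 - t) ^ (-1 - α) * (1 - t) ^ 2 := by
    rw [← rpow_add_natCast h1t.ne']
    congr 1
    push_cast
    ring
  simp only [Pi.sub_apply, Pi.mul_apply, id]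
  rw [rpow_eq_mul_sq ht0, rpow_sub_one_eq_sq ht0, rpow_add_one_half ht0, hhalf, hneg, hone, htwo]
  field_simp
  ring

lemma tendsto_hardyPrimitive_zero (hα : 0 < α) :
    Tendsto (hardyPrimitive α) (𝓝[>] 0) (𝓝 (1 / α)) := by
  have hone_sub : ContinuousAt (fun t : ℝ => (1 - t) ^ (-α)) 0 :=
    (continuousAt_const.sub continuousAt_id).rpow_const (Or.inl (by norm_num))
  have hpow {p : ℝ} (hp : 0 < p) : ContinuousAt (fun t : ℝ => t ^ p) 0 :=
    continuousAt_rpow_const _ _ (Or.inr hp.le)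
  have hcont : ContinuousAt (hardyPrimitive α) 0 :=
    (hone_sub.mul ((continuousAt_const.add (hpow hα)).sub
      ((continuousAt_const.sub continuousAt_id).mul (hpow (by linarith))))).div_const α
  have hzero : hardyPrimitive α 0 = 1 / α := by
    simp [hardyPrimitive, zero_rpow hα.ne', zero_rpow (show (α + 1) / 2 ≠ 0 by linarith)]
  exact hzero ▸ hcont.tendsto.mono_left nhdsWithin_le_nhds

lemma hardyPrimitive_eq (ht : 0 < t) :
    hardyPrimitive α t = (1 - t) ^ (-α) *
      (t * (1 - t ^ ((α - 1) / 2)) ^ 2 + (1 - t) * (1 - t ^ ((α + 1) / 2))) / α := by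
  rw [hardyPrimitive, rpow_eq_mul_sq ht, rpow_add_one_half ht]
  ring

lemma hardyPrimitive_nonneg (hα : 0 < α) (ht : t ∈ Ioo (0 : ℝ) 1) : 0 ≤ hardyPrimitive α t := by
  have ht0 := ht.1
  have h1t : 0 < 1 - t := sub_pos.2 ht.2
  have hpow : 0 ≤ 1 - t ^ ((α + 1) / 2) :=
    sub_nonneg.2 (rpow_le_one ht0.le ht.2.le (by linarith))
  rw [hardyPrimitive_eq ht0]
  positivity

lemma hardyPrimitive_le (hα0 : 0 < α) (hα2 : α < 2) (ht : t ∈ Ioo (0 : ℝ) 1) :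
    hardyPrimitive α t ≤ (1 - t) ^ (2 - α) * (3 + t ^ (α - 1)) / α := by
  have ht0 := ht.1
  have h1t : 0 < 1 - t := sub_pos.2 ht.2
  have hsq : t * (1 - t ^ ((α - 1) / 2)) ^ 2 ≤ (1 + t ^ (α - 1)) * (1 - t) ^ 2 :=
    (mul_le_of_le_one_left (sq_nonneg _) ht.2.le).trans (one_sub_rpow_half_sq_le hα0 hα2 ht)
  have hpow : t ^ 2 ≤ t ^ ((α + 1) / 2) := by
    simpa only [rpow_two] using
      rpow_le_rpow_of_exponent_ge ht0 ht.2.le (show (α + 1) / 2 ≤ 2 by linarith)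
  have hlin : (1 - t) * (1 - t ^ ((α + 1) / 2)) ≤ (1 - t) * (2 * (1 - t)) := by
    gcongr
    nlinarith [sq_nonneg (1 - t)]
  have hsplit : (1 - t) ^ (2 - α) = (1 - t) ^ (-α) * (1 - t) ^ 2 := by
    rw [← rpow_add_natCast h1t.ne']
    congr 1
    push_cast
    ring
  rw [hardyPrimitive_eq ht0, hsplit, mul_assoc]
  gcongr
  linarith

lemma tendsto_hardyPrimitive_one (hα0 : 0 < α) (hα2 : α < 2) :
    Tendsto (hardyPrimitive α) (𝓝[<] 1) (𝓝 0) := by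
  have hone_sub : ContinuousAt (fun t : ℝ => (1 - t) ^ (2 - α)) 1 :=
    (continuousAt_const.sub continuousAt_id).rpow_const (Or.inr (by linarith))
  have hpow : ContinuousAt (fun t : ℝ => t ^ (α - 1)) 1 :=
    continuousAt_rpow_const _ _ (Or.inl one_ne_zero)
  have hbound : Tendsto (fun t : ℝ => (1 - t) ^ (2 - α) * (3 + t ^ (α - 1)) / α)
      (𝓝[<] 1) (𝓝 0) := by
    have hcont : ContinuousAt (fun t : ℝ => (1 - t) ^ (2 - α) * (3 + t ^ (α - 1)) / α) 1 :=
      (hone_sub.mul (continuousAt_const.add hpow)).div_const α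
    have hlim := hcont.tendsto
    simp only [sub_self, zero_rpow (sub_ne_zero.2 hα2.ne'), zero_mul, zero_div] at hlim
    exact hlim.mono_left nhdsWithin_le_nhds
  have hIoo : ∀ᶠ t : ℝ in 𝓝[<] 1, t ∈ Ioo (0 : ℝ) 1 := Ioo_mem_nhdsLT one_pos
  exact tendsto_of_tendsto_of_tendsto_of_le_of_le' tendsto_const_nhds hbound
    (hIoo.mono fun t ht => hardyPrimitive_nonneg hα0 ht)
    (hIoo.mono fun t ht => hardyPrimitive_le hα0 hα2 ht)

lemma integral_one_sub_rpow_sq_mul (hα0 : 0 < α) (hα2 : α < 2) :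
    ∫ t in Ioo (0 : ℝ) 1, (1 - t ^ ((α - 1) / 2)) ^ 2 * (1 - t) ^ (-1 - α) =
      (3 - α) / (2 * α) * eulerBeta ((α + 1) / 2) (2 - α) - 1 / α := by
  have hp : 0 < (α + 1) / 2 := by linarith
  have hβ : 0 < 2 - α := by linarith
  have hint := integrableOn_one_sub_rpow_sq_mul hα0 hα2
  have hbeta := (integrableOn_rpow_mul_one_sub_rpow hp hβ).const_mul ((3 - α) / (2 * α))
  have hftc := intervalIntegral.integral_eq_sub_of_hasDerivAt_of_tendsto (zero_lt_one' ℝ)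
    (fun t ht => hasDerivAt_hardyPrimitive hα0.ne' ht)
    ((intervalIntegrable_iff_integrableOn_Ioo_of_le zero_le_one).2 (hint.sub hbeta))
    (tendsto_hardyPrimitive_zero hα0) (tendsto_hardyPrimitive_one hα0 hα2)
  rw [intervalIntegral.integral_of_le zero_le_one, integral_Ioc_eq_integral_Ioo,
    integral_sub hint hbeta, integral_const_mul, integral_rpow_mul_one_sub_rpow hp hβ] at hftc
  linarith

lemma kappa_one (hα : -1 < α) :
    kappa 1 α = (eulerBeta ((1 + α) / 2) ((2 - α) / 2) - 2 ^ α) / (α * 2 ^ α) := by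
  have hΓ : Gamma ((1 + α) / 2) ≠ 0 := (Gamma_pos_of_pos (by linarith)).ne'
  rw [kappa, Nat.cast_one, sub_self, zero_div, rpow_zero, one_mul, add_comm α 1, div_self hΓ,
    one_mul]

lemma eulerBeta_half_one_sub (hα2 : α < 2) :
    eulerBeta ((1 + α) / 2) ((2 - α) / 2) =
      2 ^ α * ((3 - α) / 2 * eulerBeta ((α + 1) / 2) (2 - α)) := by
  have hdup := Gamma_mul_Gamma_add_half (1 - α / 2)
  rw [show 1 - α / 2 + 1 / 2 = (3 - α) / 2 by ring, show 2 * (1 - α / 2) = 2 - α by ring,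
    show 1 - (2 - α) = α - 1 by ring, rpow_sub_one two_ne_zero] at hdup
  have hsucc : Gamma ((α + 1) / 2 + (2 - α)) = (3 - α) / 2 * Gamma ((3 - α) / 2) := by
    rw [← Gamma_add_one (by linarith)]
    congr 1
    ring
  have hthree : Gamma ((1 + α) / 2 + (2 - α) / 2) = √π / 2 := by
    rw [show (1 + α) / 2 + (2 - α) / 2 = 1 / 2 + 1 by ring, Gamma_add_one (by norm_num),
      Gamma_one_half_eq]
    ring
  have hΓ : Gamma ((3 - α) / 2) ≠ 0 := (Gamma_pos_of_pos (by linarith)).ne'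
  have hπ : √π ≠ 0 := by positivity
  have h3 : 3 - α ≠ 0 := by linarith
  have hhalf : Gamma ((2 - α) / 2) = Gamma (2 - α) * (2 ^ α / 2) * √π / Gamma ((3 - α) / 2) := by
    rw [← hdup, mul_div_cancel_right₀ _ hΓ]
    congr 1
    ring
  rw [eulerBeta, eulerBeta, hsucc, hthree, hhalf, add_comm 1 α]
  field_simp

lemma kappa_one_eq_integral (hα0 : 0 < α) (hα2 : α < 2) :
    kappa 1 α = ∫ t in Ioo (0 : ℝ) 1, (1 - t ^ ((α - 1) / 2)) ^ 2 * (1 - t) ^ (-1 - α) := by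
  rw [kappa_one (by linarith), integral_one_sub_rpow_sq_mul hα0 hα2,
    eulerBeta_half_one_sub hα2]
  field_simp

lemma kappa_one_nonneg (hα0 : 0 < α) (hα2 : α < 2) : 0 ≤ kappa 1 α := by
  rw [kappa_one_eq_integral hα0 hα2]
  exact setIntegral_nonneg measurableSet_Ioo fun t ht =>
    mul_nonneg (sq_nonneg _) (rpow_nonneg (sub_nonneg.2 ht.2.le) _)

lemma one_sub_inv_rpow_sq_mul (ht : t ∈ Ioo (0 : ℝ) 1) :
    (t ^ 2)⁻¹ * ((1 - t⁻¹ ^ ((α - 1) / 2)) ^ 2 * |t⁻¹ - 1| ^ (-1 - α)) =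
      (1 - t ^ ((α - 1) / 2)) ^ 2 * |t - 1| ^ (-1 - α) := by
  have ht0 := ht.1
  have : 0 < t ^ ((α - 1) / 2) := rpow_pos_of_pos ht0 _
  have hpow : t⁻¹ ^ (-1 - α) = t ^ 2 * (t ^ ((α - 1) / 2)) ^ 2 := by
    rw [inv_rpow ht0.le, ← rpow_neg ht0.le, show -(-1 - α) = α + 1 by ring,
      rpow_add_one ht0.ne', rpow_eq_mul_sq ht0]
    ring
  rw [abs_inv_sub_one ht, abs_sub_one ht,
    mul_rpow (inv_nonneg.2 ht0.le) (sub_nonneg.2 ht.2.le), hpow, inv_rpow ht0.le]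
  field_simp
  ring

lemma lintegral_one_sub_rpow_sq_mul (hα0 : 0 < α) (hα2 : α < 2) :
    ∫⁻ t in Ioi (0 : ℝ), ENNReal.ofReal ((1 - t ^ ((α - 1) / 2)) ^ 2 * |t - 1| ^ (-1 - α)) =
      ENNReal.ofReal (2 * kappa 1 α) := by
  rw [lintegral_Ioi_eq_lintegral_Ioo_add_inv (by fun_prop), kappa_one_eq_integral hα0 hα2,
    ← integral_const_mul, ofReal_integral_eq_lintegral_ofReal
      ((integrableOn_one_sub_rpow_sq_mul hα0 hα2).const_mul 2)]
  · refine setLIntegral_congr_fun measurableSet_Ioo fun t ht => ?_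
    have h1t : 0 < 1 - t := sub_pos.2 ht.2
    rw [← ENNReal.ofReal_mul (by positivity), one_sub_inv_rpow_sq_mul ht, abs_sub_one ht,
      ← ENNReal.ofReal_add (by positivity) (by positivity), two_mul]
  · filter_upwards [self_mem_ae_restrict measurableSet_Ioo] with t ht
    exact mul_nonneg zero_le_two (mul_nonneg (sq_nonneg _) (rpow_nonneg (sub_pos.2 ht.2).le _))

end HalfLine

section Kernel

variable {s r h : ℝ}

lemma lintegral_rpow_mul_exp_neg_mul (hs : 0 < s) (hr : 0 < r) :
    ∫⁻ t in Ioi (0 : ℝ), ENNReal.ofReal (t ^ (s - 1) * exp (-(r * t))) =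
      ENNReal.ofReal (r ^ (-s) * Gamma s) := by
  have hint := integral_rpow_mul_exp_neg_mul_Ioi hs hr
  rw [one_div, inv_rpow hr.le, ← rpow_neg hr.le] at hint
  have := Gamma_pos_of_pos hs
  rw [← hint, ofReal_integral_eq_lintegral_ofReal
    (.of_integral_ne_zero (by rw [hint]; positivity))]
  filter_upwards [self_mem_ae_restrict measurableSet_Ioi] with t ht
  exact mul_nonneg (rpow_nonneg (mem_Ioi.1 ht).le _) (exp_pos _).le

variable {V : Type*} [NormedAddCommGroup V] [InnerProductSpace ℝ V] [FiniteDimensional ℝ V]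
  [MeasurableSpace V] [BorelSpace V]

lemma lintegral_exp_neg_mul_norm_sq (hr : 0 < r) :
    ∫⁻ z : V, ENNReal.ofReal (exp (-r * ‖z‖ ^ 2)) =
      ENNReal.ofReal ((π / r) ^ (Module.finrank ℝ V / 2 : ℝ)) := by
  have hint := GaussianFourier.integral_rexp_neg_mul_sq_norm (V := V) hr
  rw [← hint, ofReal_integral_eq_lintegral_ofReal
    (.of_integral_ne_zero (by rw [hint]; positivity))]
  exact Eventually.of_forall fun z => (exp_pos _).le

/-- The value of `∫ (‖z‖² + 1) ^ (-s / 2) dz` over a `k`-dimensional Euclidean space. It relates the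
kernels `‖x - y‖ ^ (-s)` in dimension `k + 1` and `|x - y| ^ (k - s)` in dimension one. -/
noncomputable def marginalConst (k : ℕ) (s : ℝ) : ℝ :=
  π ^ ((k : ℝ) / 2) * Gamma ((s - k) / 2) / Gamma (s / 2)

lemma marginalConst_pos {k : ℕ} (hs : k < s) : 0 < marginalConst k s :=
  div_pos (mul_pos (rpow_pos_of_pos pi_pos _) (Gamma_pos_of_pos (by linarith)))
    (Gamma_pos_of_pos (half_pos (k.cast_nonneg.trans_lt hs)))

lemma kappa_succ (d : ℕ) {α : ℝ} (hα : -1 < α) :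
    kappa (d + 1) α = marginalConst d (d + 1 + α) * kappa 1 α := by
  rw [kappa_one hα, kappa, marginalConst, Nat.cast_succ, add_sub_cancel_right]
  ring_nf

lemma ofReal_rpow_neg_eq_lintegral_exp (hs : 0 < s) (hr : 0 < r) :
    ENNReal.ofReal (r ^ (-s)) =
      ENNReal.ofReal (Gamma s)⁻¹ *
        ∫⁻ t in Ioi (0 : ℝ), ENNReal.ofReal (t ^ (s - 1) * exp (-(r * t))) := by
  have := Gamma_pos_of_pos hs
  rw [lintegral_rpow_mul_exp_neg_mul hs hr, ← ENNReal.ofReal_mul (by positivity)]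
  congr 1
  field_simp

variable (V)

lemma lintegral_rpow_mul_exp_neg_mul_norm_sq_add {t : ℝ} (ht : 0 < t) :
    ∫⁻ z : V, ENNReal.ofReal (t ^ (s / 2 - 1) * exp (-((‖z‖ ^ 2 + h ^ 2) * t))) =
      ENNReal.ofReal (π ^ (Module.finrank ℝ V / 2 : ℝ)) *
        ENNReal.ofReal (t ^ ((s - Module.finrank ℝ V) / 2 - 1) * exp (-(h ^ 2 * t))) := by
  have hsplit (z : V) :
      ENNReal.ofReal (t ^ (s / 2 - 1) * exp (-((‖z‖ ^ 2 + h ^ 2) * t))) =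
        ENNReal.ofReal (t ^ (s / 2 - 1) * exp (-(h ^ 2 * t))) *
          ENNReal.ofReal (exp (-t * ‖z‖ ^ 2)) := by
    rw [← ENNReal.ofReal_mul (by positivity), mul_assoc, ← exp_add]
    ring_nf
  have hpow : t ^ ((s - Module.finrank ℝ V) / 2 - 1) =
      t ^ (s / 2 - 1) / t ^ (Module.finrank ℝ V / 2 : ℝ) := by
    rw [← rpow_sub ht]
    ring_nf
  simp_rw [hsplit]
  rw [lintegral_const_mul' _ _ ENNReal.ofReal_ne_top, lintegral_exp_neg_mul_norm_sq ht,
    ← ENNReal.ofReal_mul (by positivity), ← ENNReal.ofReal_mul (by positivity),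
    div_rpow pi_pos.le ht.le, hpow]
  ring_nf

lemma lintegral_norm_sq_add_sq_rpow (hs : Module.finrank ℝ V < s) (hh : h ≠ 0) :
    ∫⁻ z : V, ENNReal.ofReal ((‖z‖ ^ 2 + h ^ 2) ^ (-(s / 2))) =
      ENNReal.ofReal (marginalConst (Module.finrank ℝ V) s * |h| ^ (Module.finrank ℝ V - s)) := by
  have hs0 : 0 < s / 2 := half_pos ((Nat.cast_nonneg _).trans_lt hs)
  have := Gamma_pos_of_pos hs0
  have hpow : (h ^ 2) ^ (-((s - Module.finrank ℝ V) / 2)) = |h| ^ (Module.finrank ℝ V - s) := by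
    rw [← sq_abs, ← rpow_natCast_mul (abs_nonneg h)]
    congr 1
    push_cast
    ring
  calc ∫⁻ z : V, ENNReal.ofReal ((‖z‖ ^ 2 + h ^ 2) ^ (-(s / 2)))
      = ENNReal.ofReal (Gamma (s / 2))⁻¹ * ∫⁻ z : V, ∫⁻ t in Ioi (0 : ℝ),
          ENNReal.ofReal (t ^ (s / 2 - 1) * exp (-((‖z‖ ^ 2 + h ^ 2) * t))) := by
        rw [← lintegral_const_mul' _ _ ENNReal.ofReal_ne_top]
        exact lintegral_congr fun z => ofReal_rpow_neg_eq_lintegral_exp hs0 (by positivity)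
    _ = ENNReal.ofReal (Gamma (s / 2))⁻¹ * ∫⁻ t in Ioi (0 : ℝ),
          ENNReal.ofReal (π ^ (Module.finrank ℝ V / 2 : ℝ)) *
            ENNReal.ofReal (t ^ ((s - Module.finrank ℝ V) / 2 - 1) * exp (-(h ^ 2 * t))) := by
        rw [lintegral_lintegral_swap (by fun_prop)]
        congr 1
        exact setLIntegral_congr_fun measurableSet_Ioi fun t ht =>
          lintegral_rpow_mul_exp_neg_mul_norm_sq_add V ht
    _ = ENNReal.ofReal (marginalConst (Module.finrank ℝ V) s *
          |h| ^ (Module.finrank ℝ V - s)) := by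
        rw [lintegral_const_mul' _ _ ENNReal.ofReal_ne_top,
          lintegral_rpow_mul_exp_neg_mul (by linarith) (by positivity), hpow,
          ← ENNReal.ofReal_mul (by positivity), ← ENNReal.ofReal_mul (by positivity),
          marginalConst]
        ring_nf

end Kernel

section Coordinates

variable {d : ℕ}

lemma mem_halfSpace {x : EuclideanSpace ℝ (Fin (d + 1))} :
    x ∈ halfSpace d ↔ 0 < x (Fin.last d) :=
  Iff.rfl

lemma measurableSet_halfSpace (d : ℕ) : MeasurableSet (halfSpace d) :=
  measurableSet_lt measurable_const (by fun_prop)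

/-- The point of `ℝ^{d+1}` with horizontal coordinates `z` and height `τ`. -/
noncomputable def upperPoint (z : EuclideanSpace ℝ (Fin d)) (τ : ℝ) :
    EuclideanSpace ℝ (Fin (d + 1)) :=
  WithLp.toLp 2 ((Fin.last d).insertNth τ (WithLp.ofLp z))

@[simp]
lemma upperPoint_last (z : EuclideanSpace ℝ (Fin d)) (τ : ℝ) :
    upperPoint z τ (Fin.last d) = τ := by
  simp only [upperPoint, Fin.insertNth_apply_same]

@[simp]
lemma upperPoint_castSucc (z : EuclideanSpace ℝ (Fin d)) (τ : ℝ) (i : Fin d) :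
    upperPoint z τ i.castSucc = z i := by
  simp only [upperPoint, ← Fin.succAbove_last_apply, Fin.insertNth_apply_succAbove]

lemma measurePreserving_upperPoint (d : ℕ) :
    MeasurePreserving fun q : ℝ × EuclideanSpace ℝ (Fin d) => upperPoint q.2 q.1 :=
  (PiLp.volume_preserving_toLp _).comp
    ((volume_preserving_piFinSuccAbove (fun _ => ℝ) (Fin.last d)).symm.comp
      ((MeasurePreserving.id volume).prod (PiLp.volume_preserving_ofLp _)))

lemma setLIntegral_halfSpace {f : EuclideanSpace ℝ (Fin (d + 1)) → ENNReal} (hf : Measurable f) :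
    ∫⁻ x in halfSpace d, f x =
      ∫⁻ τ in Ioi (0 : ℝ), ∫⁻ z : EuclideanSpace ℝ (Fin d), f (upperPoint z τ) := by
  have hpre : (fun q : ℝ × EuclideanSpace ℝ (Fin d) => upperPoint q.2 q.1) ⁻¹' halfSpace d =
      Ioi 0 ×ˢ univ := by
    ext q
    simp [mem_halfSpace]
  have hmp := measurePreserving_upperPoint d
  rw [← hmp.setLIntegral_comp_preimage (measurableSet_halfSpace d) hf, hpre,
    Measure.volume_eq_prod, setLIntegral_prod (fun q => f (upperPoint q.2 q.1))
      (hf.comp hmp.measurable).aemeasurable, Measure.restrict_univ]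

/-- The point of the half-space with horizontal coordinates `0` and height `1`. -/
noncomputable def upperUnit (d : ℕ) : EuclideanSpace ℝ (Fin (d + 1)) :=
  EuclideanSpace.single (Fin.last d) 1

@[simp]
lemma upperUnit_last (d : ℕ) : upperUnit d (Fin.last d) = 1 := by simp [upperUnit]

lemma norm_upperPoint_sub_upperUnit_sq (z : EuclideanSpace ℝ (Fin d)) (τ : ℝ) :
    ‖upperPoint z τ - upperUnit d‖ ^ 2 = ‖z‖ ^ 2 + (τ - 1) ^ 2 := by
  rw [EuclideanSpace.norm_sq_eq, EuclideanSpace.norm_sq_eq, Fin.sum_univ_castSucc]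
  simp [upperUnit, Fin.castSucc_ne_last]

lemma setLIntegral_norm_sub_upperUnit_rpow_mul {s : ℝ} (hs : d < s) {g : ℝ → ENNReal}
    (hg : Measurable g) :
    ∫⁻ p in halfSpace d, ENNReal.ofReal (‖p - upperUnit d‖ ^ (-s)) * g (p (Fin.last d)) =
      ENNReal.ofReal (marginalConst d s) *
        ∫⁻ τ in Ioi (0 : ℝ), ENNReal.ofReal (|τ - 1| ^ (d - s)) * g τ := by
  have hne : ∀ᵐ τ ∂volume.restrict (Ioi (0 : ℝ)), τ ≠ 1 :=
    ae_restrict_of_ae (Measure.ae_ne volume 1)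
  have hnorm (z : EuclideanSpace ℝ (Fin d)) (τ : ℝ) :
      ‖upperPoint z τ - upperUnit d‖ ^ (-s) = (‖z‖ ^ 2 + (τ - 1) ^ 2) ^ (-(s / 2)) := by
    rw [← norm_upperPoint_sub_upperUnit_sq, ← rpow_natCast_mul (norm_nonneg _)]
    congr 1
    push_cast
    ring
  rw [setLIntegral_halfSpace (by fun_prop), ← lintegral_const_mul' _ _ ENNReal.ofReal_ne_top]
  refine lintegral_congr_ae (hne.mono fun τ hτ => ?_)
  have hmarginal := lintegral_norm_sq_add_sq_rpow (EuclideanSpace ℝ (Fin d)) (s := s)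
    (by simpa using hs) (sub_ne_zero.2 hτ)
  simp only [finrank_euclideanSpace_fin] at hmarginal
  simp only [upperPoint_last, hnorm]
  rw [lintegral_mul_const _ (by fun_prop), hmarginal,
    ENNReal.ofReal_mul (marginalConst_pos hs).le, mul_assoc]

end Coordinates

section Group

variable {d : ℕ} {x p : EuclideanSpace ℝ (Fin (d + 1))}

/-- The orthogonal projection of `x` onto the boundary hyperplane of the half-space. -/
noncomputable def horizontalPart (x : EuclideanSpace ℝ (Fin (d + 1))) :
    EuclideanSpace ℝ (Fin (d + 1)) :=
  x - x (Fin.last d) • upperUnit d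

/-- The product of `x` and `p` in the half-space, seen as the group of the affine maps
`p ↦ x_d p + horizontalPart x`; its identity is `upperUnit d`. -/
noncomputable def upperMul (x p : EuclideanSpace ℝ (Fin (d + 1))) :
    EuclideanSpace ℝ (Fin (d + 1)) :=
  x (Fin.last d) • p + horizontalPart x

lemma continuous_horizontalPart : Continuous (horizontalPart (d := d)) := by
  unfold horizontalPart
  fun_prop

lemma continuous_upperMul :
    Continuous fun q : EuclideanSpace ℝ (Fin (d + 1)) × EuclideanSpace ℝ (Fin (d + 1)) =>
      upperMul q.1 q.2 := by
  unfold upperMul horizontalPart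
  fun_prop

lemma horizontalPart_last (x : EuclideanSpace ℝ (Fin (d + 1))) :
    horizontalPart x (Fin.last d) = 0 := by
  simp [horizontalPart]

lemma upperMul_last (x p : EuclideanSpace ℝ (Fin (d + 1))) :
    upperMul x p (Fin.last d) = x (Fin.last d) * p (Fin.last d) := by
  simp [upperMul, horizontalPart_last]

lemma upperMul_eq_add (x p : EuclideanSpace ℝ (Fin (d + 1))) :
    upperMul x p = x + x (Fin.last d) • (p - upperUnit d) := by
  rw [upperMul, horizontalPart, smul_sub]
  abel

lemma norm_sub_upperMul (hx : x ∈ halfSpace d) (p : EuclideanSpace ℝ (Fin (d + 1))) :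
    ‖x - upperMul x p‖ = x (Fin.last d) * ‖p - upperUnit d‖ := by
  rw [upperMul_eq_add, sub_add_cancel_left, norm_neg, norm_smul, norm_of_nonneg (le_of_lt hx)]

lemma horizontalPart_upperMul (x p : EuclideanSpace ℝ (Fin (d + 1))) :
    horizontalPart (upperMul x p) = horizontalPart x + x (Fin.last d) • horizontalPart p := by
  rw [horizontalPart, upperMul_last, upperMul, horizontalPart, horizontalPart, smul_sub, mul_smul]
  abel

lemma norm_sub_upperUnit_sq (p : EuclideanSpace ℝ (Fin (d + 1))) :
    ‖p - upperUnit d‖ ^ 2 = ‖horizontalPart p‖ ^ 2 + (p (Fin.last d) - 1) ^ 2 := by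
  have hcoord (i : Fin d) : horizontalPart p i.castSucc = p i.castSucc := by
    simp [horizontalPart, upperUnit, Fin.castSucc_ne_last]
  have hlast := horizontalPart_last p
  rw [EuclideanSpace.norm_sq_eq, EuclideanSpace.norm_sq_eq, Fin.sum_univ_castSucc,
    Fin.sum_univ_castSucc]
  simp [hcoord, hlast, upperUnit, Fin.castSucc_ne_last]

lemma preimage_upperMul_left (hx : x ∈ halfSpace d) : upperMul x ⁻¹' halfSpace d = halfSpace d := by
  ext p
  rw [mem_preimage, mem_halfSpace, mem_halfSpace, upperMul_last]
  exact mul_pos_iff_of_pos_left hx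

lemma preimage_upperMul_right (hp : p ∈ halfSpace d) :
    (upperMul · p) ⁻¹' halfSpace d = halfSpace d := by
  ext x
  rw [mem_preimage, mem_halfSpace, mem_halfSpace, upperMul_last]
  exact mul_pos_iff_of_pos_right hp

lemma measurable_upperMul_left (x : EuclideanSpace ℝ (Fin (d + 1))) : Measurable (upperMul x) :=
  (continuous_upperMul.comp (Continuous.prodMk_right x)).measurable

lemma measurable_upperMul_right (p : EuclideanSpace ℝ (Fin (d + 1))) :
    Measurable (upperMul · p) :=
  (continuous_upperMul.comp (Continuous.prodMk_left p)).measurable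

lemma map_upperMul_left (hx : x ∈ halfSpace d) :
    (volume.restrict (halfSpace d)).map (upperMul x) =
      ENNReal.ofReal (x (Fin.last d) ^ (d + 1))⁻¹ • volume.restrict (halfSpace d) := by
  have hx0 : 0 < x (Fin.last d) := hx
  have hvol : (volume : Measure (EuclideanSpace ℝ (Fin (d + 1)))).map (upperMul x) =
      ENNReal.ofReal (x (Fin.last d) ^ (d + 1))⁻¹ • volume := by
    have hcomp : upperMul x = (· + horizontalPart x) ∘ (x (Fin.last d) • ·) := rfl
    rw [hcomp, ← Measure.map_map (measurable_add_const _) (measurable_const_smul _),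
      Measure.map_addHaar_smul _ hx0.ne', Measure.map_smul, map_add_right_eq_self,
      finrank_euclideanSpace_fin, abs_of_pos (by positivity)]
  rw [← Measure.restrict_smul, ← hvol, Measure.restrict_map (measurable_upperMul_left x)
    (measurableSet_halfSpace d), preimage_upperMul_left hx]

lemma map_upperMul_right (hp : p ∈ halfSpace d) :
    (volume.restrict (halfSpace d)).map (upperMul · p) =
      ENNReal.ofReal (p (Fin.last d))⁻¹ • volume.restrict (halfSpace d) := by
  have hp0 : 0 < p (Fin.last d) := hp
  have hvol : (volume : Measure (EuclideanSpace ℝ (Fin (d + 1)))).map (upperMul · p) =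
      ENNReal.ofReal (p (Fin.last d))⁻¹ • volume := by
    have hlinear : (upperMul · p) = LinearMap.transvection
        (EuclideanSpace.proj (Fin.last d)).toLinearMap (p - upperUnit d) := by
      ext1 x
      rw [upperMul_eq_add]
      simp [LinearMap.transvection.apply]
    have hdet : LinearMap.det (LinearMap.transvection
        (EuclideanSpace.proj (𝕜 := ℝ) (Fin.last d)).toLinearMap (p - upperUnit d)) =
          p (Fin.last d) := by
      simp [LinearMap.transvection.det]
    rw [hlinear, Measure.map_linearMap_addHaar_eq_smul_addHaar _ (hdet ▸ hp0.ne'), hdet,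
      abs_of_pos (inv_pos.2 hp0)]
  rw [← Measure.restrict_smul, ← hvol, Measure.restrict_map (measurable_upperMul_right p)
    (measurableSet_halfSpace d), preimage_upperMul_right hp]

lemma setLIntegral_upperMul_left (hx : x ∈ halfSpace d)
    {f : EuclideanSpace ℝ (Fin (d + 1)) → ENNReal} (hf : Measurable f) :
    ∫⁻ y in halfSpace d, f y =
      ENNReal.ofReal (x (Fin.last d) ^ (d + 1)) * ∫⁻ p in halfSpace d, f (upperMul x p) := by
  have hx0 : 0 < x (Fin.last d) := hx
  rw [← lintegral_map hf (measurable_upperMul_left x), map_upperMul_left hx,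
    lintegral_smul_measure, smul_eq_mul, ← mul_assoc, ← ENNReal.ofReal_mul (by positivity),
    mul_inv_cancel₀ (by positivity), ENNReal.ofReal_one, one_mul]

/-- The measure `dx / x_d` on the half-space, invariant under right multiplication. -/
noncomputable def upperHaar (d : ℕ) : Measure (EuclideanSpace ℝ (Fin (d + 1))) :=
  (volume.restrict (halfSpace d)).withDensity fun x => ENNReal.ofReal (x (Fin.last d))⁻¹

instance : SFinite (upperHaar d) := by
  unfold upperHaar
  infer_instance

lemma lintegral_upperHaar {f : EuclideanSpace ℝ (Fin (d + 1)) → ENNReal} (hf : Measurable f) :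
    ∫⁻ x, f x ∂upperHaar d =
      ∫⁻ x in halfSpace d, ENNReal.ofReal (x (Fin.last d))⁻¹ * f x :=
  lintegral_withDensity_eq_lintegral_mul _ (by fun_prop) hf

lemma ae_upperHaar_mem (d : ℕ) : ∀ᵐ x ∂upperHaar d, x ∈ halfSpace d :=
  (withDensity_absolutelyContinuous _ _).ae_le (ae_restrict_mem (measurableSet_halfSpace d))

lemma measurePreserving_upperMul_right (hp : p ∈ halfSpace d) :
    MeasurePreserving (upperMul · p) (upperHaar d) (upperHaar d) := by
  have hp0 : 0 < p (Fin.last d) := hp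
  refine ⟨measurable_upperMul_right p, Measure.ext_of_lintegral _ fun f hf => ?_⟩
  have hdensity (x : EuclideanSpace ℝ (Fin (d + 1))) :
      ENNReal.ofReal (x (Fin.last d))⁻¹ * f (upperMul x p) = ENNReal.ofReal (p (Fin.last d)) *
        (ENNReal.ofReal (upperMul x p (Fin.last d))⁻¹ * f (upperMul x p)) := by
    rw [← mul_assoc, ← ENNReal.ofReal_mul hp0.le, upperMul_last]
    congr 2
    field_simp
  have hmap := lintegral_map (μ := volume.restrict (halfSpace d))
    (f := fun x => ENNReal.ofReal (x (Fin.last d))⁻¹ * f x) (by fun_prop)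
    (measurable_upperMul_right p)
  rw [map_upperMul_right hp, lintegral_smul_measure, smul_eq_mul] at hmap
  rw [lintegral_map hf (measurable_upperMul_right p),
    lintegral_upperHaar (f := fun x => f (upperMul x p)) (hf.comp (measurable_upperMul_right p)),
    lintegral_upperHaar hf]
  simp_rw [hdensity]
  rw [lintegral_const_mul' _ _ ENNReal.ofReal_ne_top, ← hmap, ← mul_assoc,
    ← ENNReal.ofReal_mul hp0.le, mul_inv_cancel₀ hp0.ne', ENNReal.ofReal_one, one_mul]

end Group

section MeasurePreserving

variable {X : Type*} [MeasurableSpace X] {μ : Measure X} {T : X → X} {v : X → ℝ}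

lemma lintegral_sub_comp_sq_le (hT : MeasurePreserving T μ μ) (hv : Measurable v) :
    ∫⁻ x, ENNReal.ofReal ((v x - v (T x)) ^ 2) ∂μ ≤ 4 * ∫⁻ x, ENNReal.ofReal (v x ^ 2) ∂μ := by
  have hcomp : ∫⁻ x, ENNReal.ofReal (v (T x) ^ 2) ∂μ = ∫⁻ x, ENNReal.ofReal (v x ^ 2) ∂μ :=
    hT.lintegral_comp (by fun_prop : Measurable fun x => ENNReal.ofReal (v x ^ 2))
  calc ∫⁻ x, ENNReal.ofReal ((v x - v (T x)) ^ 2) ∂μ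
      ≤ ∫⁻ x, (2 * ENNReal.ofReal (v x ^ 2) + 2 * ENNReal.ofReal (v (T x) ^ 2)) ∂μ := by
        refine lintegral_mono fun x => ?_
        rw [← ENNReal.ofReal_ofNat 2, ← ENNReal.ofReal_mul zero_le_two,
          ← ENNReal.ofReal_mul zero_le_two, ← ENNReal.ofReal_add (by positivity) (by positivity)]
        exact ENNReal.ofReal_le_ofReal (by nlinarith [sq_nonneg (v x + v (T x))])
    _ = 4 * ∫⁻ x, ENNReal.ofReal (v x ^ 2) ∂μ := by
        rw [lintegral_add_left (by fun_prop), lintegral_const_mul' _ _ ENNReal.ofNat_ne_top,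
          lintegral_const_mul' _ _ ENNReal.ofNat_ne_top, hcomp, ← add_mul]
        norm_num

lemma lintegral_sub_mul_comp_sq (hT : MeasurePreserving T μ μ) (hv : MemLp v 2 μ) {c : ℝ}
    (hc : 0 ≤ c) :
    ∫⁻ x, ENNReal.ofReal ((v x - c * v (T x)) ^ 2) ∂μ =
      ENNReal.ofReal ((1 - c) ^ 2) * ∫⁻ x, ENNReal.ofReal (v x ^ 2) ∂μ +
        ENNReal.ofReal c * ∫⁻ x, ENNReal.ofReal ((v x - v (T x)) ^ 2) ∂μ := by
  have hvT : MemLp (fun x => v (T x)) 2 μ := hv.comp_measurePreserving hT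
  have hsub : MemLp (fun x => v x - c * v (T x)) 2 μ := hv.sub (hvT.const_mul c)
  have hsub' : MemLp (fun x => v x - v (T x)) 2 μ := hv.sub hvT
  have hofReal {w : X → ℝ} (hw : MemLp w 2 μ) :
      ∫⁻ x, ENNReal.ofReal (w x ^ 2) ∂μ = ENNReal.ofReal (∫ x, w x ^ 2 ∂μ) :=
    (ofReal_integral_eq_lintegral_ofReal hw.integrable_sq
      (Eventually.of_forall fun x => sq_nonneg (w x))).symm
  have hcomp : ∫ x, v (T x) ^ 2 ∂μ = ∫ x, v x ^ 2 ∂μ := by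
    have hae : AEStronglyMeasurable (fun x => v x ^ 2) (μ.map T) := by
      rw [hT.map_eq]
      exact hv.aestronglyMeasurable.pow 2
    rw [← integral_map hT.aemeasurable hae, hT.map_eq]
  have hidentity : ∫ x, (v x - c * v (T x)) ^ 2 ∂μ =
      (1 - c) ^ 2 * ∫ x, v x ^ 2 ∂μ + c * ∫ x, (v x - v (T x)) ^ 2 ∂μ := by
    calc ∫ x, (v x - c * v (T x)) ^ 2 ∂μ
        = ∫ x, ((1 - c) * v x ^ 2 + (c ^ 2 - c) * v (T x) ^ 2 + c * (v x - v (T x)) ^ 2) ∂μ := by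
          congr 1 with x
          ring
      _ = (1 - c) * ∫ x, v x ^ 2 ∂μ + (c ^ 2 - c) * ∫ x, v (T x) ^ 2 ∂μ +
            c * ∫ x, (v x - v (T x)) ^ 2 ∂μ := by
          have hint : Integrable (fun x => (1 - c) * v x ^ 2 + (c ^ 2 - c) * v (T x) ^ 2) μ :=
            (hv.integrable_sq.const_mul _).add (hvT.integrable_sq.const_mul _)
          rw [integral_add hint (hsub'.integrable_sq.const_mul _),
            integral_add (hv.integrable_sq.const_mul _) (hvT.integrable_sq.const_mul _),
            integral_const_mul, integral_const_mul, integral_const_mul]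
      _ = _ := by
          rw [hcomp]
          ring
  rw [hofReal hv, hofReal hsub, hofReal hsub', hidentity, ENNReal.ofReal_add, ENNReal.ofReal_mul,
    ENNReal.ofReal_mul hc]
  all_goals positivity

end MeasurePreserving

section Energy

variable {d : ℕ} {α : ℝ} {v : EuclideanSpace ℝ (Fin (d + 1)) → ℝ}

/-- The double integral on the left of the Hardy inequality, as an extended nonnegative number and
without the factor `1 / 2`. -/
noncomputable def fractionalEnergy (α : ℝ) (u : EuclideanSpace ℝ (Fin (d + 1)) → ℝ) : ENNReal :=
  ∫⁻ x in halfSpace d, ∫⁻ y in halfSpace d,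
    ENNReal.ofReal ((u x - u y) ^ 2 / ‖x - y‖ ^ ((d : ℝ) + 1 + α))

lemma integral_integral_le_toReal_fractionalEnergy {u : EuclideanSpace ℝ (Fin (d + 1)) → ℝ}
    (hu : Measurable u) (hfin : fractionalEnergy α u ≠ ⊤) :
    ∫ x in halfSpace d, ∫ y in halfSpace d, (u x - u y) ^ 2 / ‖x - y‖ ^ ((d : ℝ) + 1 + α) ≤
      (fractionalEnergy α u).toReal := by
  have hmeas : Measurable fun q : EuclideanSpace ℝ (Fin (d + 1)) × EuclideanSpace ℝ (Fin (d + 1)) =>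
      (u q.1 - u q.2) ^ 2 / ‖q.1 - q.2‖ ^ ((d : ℝ) + 1 + α) := by
    fun_prop
  have hinner (x : EuclideanSpace ℝ (Fin (d + 1))) :
      ∫ y in halfSpace d, (u x - u y) ^ 2 / ‖x - y‖ ^ ((d : ℝ) + 1 + α) =
        (∫⁻ y in halfSpace d,
          ENNReal.ofReal ((u x - u y) ^ 2 / ‖x - y‖ ^ ((d : ℝ) + 1 + α))).toReal :=
    integral_eq_lintegral_of_nonneg_ae (Eventually.of_forall fun y => by positivity)
      (hmeas.comp measurable_prodMk_left).aestronglyMeasurable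
  simp_rw [hinner]
  rw [integral_eq_lintegral_of_nonneg_ae (Eventually.of_forall fun x => ENNReal.toReal_nonneg)
    (Measurable.aestronglyMeasurable (by fun_prop))]
  exact ENNReal.toReal_mono hfin (lintegral_mono fun x => ENNReal.ofReal_toReal_le)

/-- The ground state `x_d ^ ((α - 1) / 2)` of the Hardy inequality times `v`. -/
noncomputable def groundStateMul (α : ℝ) (v : EuclideanSpace ℝ (Fin (d + 1)) → ℝ)
    (x : EuclideanSpace ℝ (Fin (d + 1))) : ℝ :=
  x (Fin.last d) ^ ((α - 1) / 2) * v x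

lemma measurable_groundStateMul (hv : Measurable v) :
    Measurable (groundStateMul α v) := by
  unfold groundStateMul
  fun_prop

lemma groundStateMul_sq_mul_rpow (v : EuclideanSpace ℝ (Fin (d + 1)) → ℝ)
    {x : EuclideanSpace ℝ (Fin (d + 1))} (hx : x ∈ halfSpace d) :
    groundStateMul α v x ^ 2 * x (Fin.last d) ^ (-α) = (x (Fin.last d))⁻¹ * v x ^ 2 := by
  have hx0 : 0 < x (Fin.last d) := hx
  have hpow : (x (Fin.last d) ^ ((α - 1) / 2)) ^ 2 * x (Fin.last d) ^ (-α) =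
      (x (Fin.last d))⁻¹ := by
    rw [← rpow_mul_natCast hx0.le, ← rpow_add hx0, ← rpow_neg_one]
    congr 1
    push_cast
    ring
  rw [groundStateMul, mul_pow, mul_right_comm, hpow]

lemma ofReal_energyDensity_upperMul (v : EuclideanSpace ℝ (Fin (d + 1)) → ℝ)
    {x p : EuclideanSpace ℝ (Fin (d + 1))} (hx : x ∈ halfSpace d) (hp : p ∈ halfSpace d) :
    ENNReal.ofReal (x (Fin.last d) ^ (d + 1)) *
        ENNReal.ofReal ((groundStateMul α v x - groundStateMul α v (upperMul x p)) ^ 2 /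
          ‖x - upperMul x p‖ ^ ((d : ℝ) + 1 + α)) =
      ENNReal.ofReal (‖p - upperUnit d‖ ^ (-((d : ℝ) + 1 + α))) *
        (ENNReal.ofReal (x (Fin.last d))⁻¹ * ENNReal.ofReal
          ((v x - p (Fin.last d) ^ ((α - 1) / 2) * v (upperMul x p)) ^ 2)) := by
  have hx0 : 0 < x (Fin.last d) := hx
  have hp0 : 0 < p (Fin.last d) := hp
  have hpow : x (Fin.last d) ^ ((d : ℝ) + 1 + α) =
      x (Fin.last d) ^ (d + 1) * x (Fin.last d) * (x (Fin.last d) ^ ((α - 1) / 2)) ^ 2 := by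
    rw [← pow_succ, ← rpow_natCast, ← rpow_mul_natCast hx0.le, ← rpow_add hx0]
    congr 1
    push_cast
    ring
  have := rpow_pos_of_pos hx0 ((α - 1) / 2)
  rw [← ENNReal.ofReal_mul (by positivity), ← ENNReal.ofReal_mul (by positivity),
    ← ENNReal.ofReal_mul (by positivity), groundStateMul, groundStateMul, upperMul_last,
    norm_sub_upperMul hx, mul_rpow hx0.le hp0.le, mul_rpow hx0.le (norm_nonneg _),
    rpow_neg (norm_nonneg _), hpow, mul_assoc, ← mul_sub, mul_pow, div_eq_mul_inv, mul_inv]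
  congr 1
  field_simp

lemma fractionalEnergy_groundStateMul_eq_lintegral (hv : Measurable v) :
    fractionalEnergy α (groundStateMul α v) =
      ∫⁻ p in halfSpace d, ENNReal.ofReal (‖p - upperUnit d‖ ^ (-((d : ℝ) + 1 + α))) *
        ∫⁻ x, ENNReal.ofReal ((v x - p (Fin.last d) ^ ((α - 1) / 2) * v (upperMul x p)) ^ 2)
          ∂upperHaar d := by
  have hmul : Measurable fun q : EuclideanSpace ℝ (Fin (d + 1)) × EuclideanSpace ℝ (Fin (d + 1)) =>
      upperMul q.1 q.2 := continuous_upperMul.measurable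
  have hu : Measurable (groundStateMul α v) := measurable_groundStateMul hv
  calc fractionalEnergy α (groundStateMul α v)
      = ∫⁻ x in halfSpace d, ∫⁻ p in halfSpace d,
          ENNReal.ofReal (‖p - upperUnit d‖ ^ (-((d : ℝ) + 1 + α))) *
            (ENNReal.ofReal (x (Fin.last d))⁻¹ * ENNReal.ofReal
              ((v x - p (Fin.last d) ^ ((α - 1) / 2) * v (upperMul x p)) ^ 2)) := by
        refine setLIntegral_congr_fun (measurableSet_halfSpace d) fun x hx => ?_
        rw [setLIntegral_upperMul_left hx (by fun_prop),
          ← lintegral_const_mul' _ _ ENNReal.ofReal_ne_top]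
        exact setLIntegral_congr_fun (measurableSet_halfSpace d) fun p hp =>
          ofReal_energyDensity_upperMul v hx hp
    _ = _ := by
        rw [lintegral_lintegral_swap (by fun_prop)]
        refine lintegral_congr fun p => ?_
        have := measurable_upperMul_right p
        rw [lintegral_const_mul' _ _ ENNReal.ofReal_ne_top, lintegral_upperHaar (by fun_prop)]

lemma setLIntegral_norm_sub_upperUnit_rpow_mul_one_sub_rpow_sq (hα0 : 0 < α) (hα2 : α < 2) :
    ∫⁻ p in halfSpace d, ENNReal.ofReal (‖p - upperUnit d‖ ^ (-((d : ℝ) + 1 + α))) *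
        ENNReal.ofReal ((1 - p (Fin.last d) ^ ((α - 1) / 2)) ^ 2) =
      ENNReal.ofReal (2 * kappa (d + 1) α) := by
  have hs : (d : ℝ) < d + 1 + α := by linarith
  rw [setLIntegral_norm_sub_upperUnit_rpow_mul hs
      (g := fun τ => ENNReal.ofReal ((1 - τ ^ ((α - 1) / 2)) ^ 2)) (by fun_prop),
    kappa_succ d (by linarith), mul_left_comm, ENNReal.ofReal_mul (marginalConst_pos hs).le,
    ← lintegral_one_sub_rpow_sq_mul hα0 hα2]
  congr 1
  refine lintegral_congr fun τ => ?_
  rw [ENNReal.ofReal_mul (sq_nonneg _), mul_comm]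
  ring_nf

-- The ground state representation: invariance of `upperHaar` completes the square for each `p`.
lemma fractionalEnergy_groundStateMul (hα0 : 0 < α) (hα2 : α < 2) (hv : Measurable v)
    (hv2 : MemLp v 2 (upperHaar d)) :
    fractionalEnergy α (groundStateMul α v) =
      ENNReal.ofReal (2 * kappa (d + 1) α) * ∫⁻ x, ENNReal.ofReal (v x ^ 2) ∂upperHaar d +
        ∫⁻ p in halfSpace d,
          ENNReal.ofReal (‖p - upperUnit d‖ ^ (-((d : ℝ) + 1 + α)) *
            p (Fin.last d) ^ ((α - 1) / 2)) *
          ∫⁻ x, ENNReal.ofReal ((v x - v (upperMul x p)) ^ 2) ∂upperHaar d := by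
  rw [fractionalEnergy_groundStateMul_eq_lintegral hv,
    ← setLIntegral_norm_sub_upperUnit_rpow_mul_one_sub_rpow_sq hα0 hα2,
    ← lintegral_mul_const _ (by fun_prop), ← lintegral_add_left (by fun_prop)]
  refine setLIntegral_congr_fun (measurableSet_halfSpace d) fun p hp => ?_
  have hp0 : 0 < p (Fin.last d) := hp
  beta_reduce
  rw [lintegral_sub_mul_comp_sq (measurePreserving_upperMul_right hp) hv2 (rpow_nonneg hp0.le _),
    ENNReal.ofReal_mul (by positivity)]
  ring

lemma kappa_succ_nonneg (d : ℕ) (hα0 : 0 < α) (hα2 : α < 2) : 0 ≤ kappa (d + 1) α := by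
  rw [kappa_succ d (by linarith)]
  exact mul_nonneg (marginalConst_pos (by linarith)).le (kappa_one_nonneg hα0 hα2)

end Energy

section LogBox

variable {d : ℕ} {r t : ℝ} {x : EuclideanSpace ℝ (Fin (d + 1))}

/-- The points whose horizontal part has norm at most `r` and whose height has a logarithm of
absolute value at most `t`. -/
def logBox (d : ℕ) (r t : ℝ) : Set (EuclideanSpace ℝ (Fin (d + 1))) :=
  {x | ‖horizontalPart x‖ ≤ r ∧ x (Fin.last d) ∈ Icc (exp (-t)) (exp t)}

lemma mem_logBox :
    x ∈ logBox d r t ↔ ‖horizontalPart x‖ ≤ r ∧ x (Fin.last d) ∈ Icc (exp (-t)) (exp t) :=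
  Iff.rfl

lemma mem_logBox_iff_abs_log_le (hx : x ∈ halfSpace d) :
    x ∈ logBox d r t ↔ ‖horizontalPart x‖ ≤ r ∧ |log (x (Fin.last d))| ≤ t := by
  rw [mem_logBox, mem_Icc, abs_le, le_log_iff_exp_le hx, log_le_iff_le_exp hx]

lemma logBox_subset_halfSpace : logBox d r t ⊆ halfSpace d :=
  fun _ hx => (exp_pos _).trans_le hx.2.1

lemma isCompact_logBox : IsCompact (logBox d r t) := by
  have hlast : Continuous fun x : EuclideanSpace ℝ (Fin (d + 1)) => x (Fin.last d) := by fun_prop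
  refine Metric.isCompact_of_isClosed_isBounded
    ((isClosed_le continuous_horizontalPart.norm continuous_const).inter
      (isClosed_Icc.preimage hlast))
    ((Metric.isBounded_closedBall (x := 0) (r := r + exp t * ‖upperUnit d‖)).subset fun x hx => ?_)
  have hx0 : 0 < x (Fin.last d) := logBox_subset_halfSpace hx
  have hsum : x = horizontalPart x + x (Fin.last d) • upperUnit d := (sub_add_cancel _ _).symm
  rw [mem_closedBall_zero_iff]
  calc ‖x‖ ≤ ‖horizontalPart x‖ + x (Fin.last d) * ‖upperUnit d‖ := by
        nth_rewrite 1 [hsum]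
        exact (norm_add_le _ _).trans_eq (by rw [norm_smul, norm_of_nonneg hx0.le])
    _ ≤ r + exp t * ‖upperUnit d‖ := by
        gcongr
        exacts [hx.1, hx.2.2]

lemma measurableSet_logBox : MeasurableSet (logBox d r t) :=
  isCompact_logBox.isClosed.measurableSet

lemma norm_horizontalPart_upperPoint (z : EuclideanSpace ℝ (Fin d)) (τ : ℝ) :
    ‖horizontalPart (upperPoint z τ)‖ = ‖z‖ := by
  have hsq := norm_sub_upperUnit_sq (upperPoint z τ)
  rw [norm_upperPoint_sub_upperUnit_sq, upperPoint_last, add_left_inj] at hsq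
  exact ((sq_eq_sq₀ (norm_nonneg _) (norm_nonneg _)).1 hsq).symm

lemma setLIntegral_Icc_exp_ofReal_inv (ht : 0 ≤ t) :
    ∫⁻ τ in Icc (exp (-t)) (exp t), ENNReal.ofReal τ⁻¹ = ENNReal.ofReal (2 * t) := by
  have hle : exp (-t) ≤ exp t := exp_le_exp.2 (by linarith)
  have hint : IntegrableOn (fun τ : ℝ => τ⁻¹) (Icc (exp (-t)) (exp t)) :=
    (continuousOn_inv₀.mono fun τ hτ => ((exp_pos _).trans_le hτ.1).ne').integrableOn_Icc
  have hnonneg : ∀ᵐ τ ∂volume.restrict (Icc (exp (-t)) (exp t)), 0 ≤ τ⁻¹ := by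
    filter_upwards [self_mem_ae_restrict measurableSet_Icc] with τ hτ
    exact inv_nonneg.2 ((exp_pos _).trans_le hτ.1).le
  rw [← ofReal_integral_eq_lintegral_ofReal hint hnonneg, integral_Icc_eq_integral_Ioc,
    ← intervalIntegral.integral_of_le hle, integral_inv_of_pos (exp_pos _) (exp_pos _),
    log_div (exp_ne_zero _) (exp_ne_zero _), log_exp, log_exp, sub_neg_eq_add, two_mul]

lemma upperHaar_logBox (hr : 0 ≤ r) (ht : 0 ≤ t) :
    upperHaar d (logBox d r t) = ENNReal.ofReal (r ^ d * (2 * t)) *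
      volume (Metric.closedBall (0 : EuclideanSpace ℝ (Fin d)) 1) := by
  have hslice (τ : ℝ) (z : EuclideanSpace ℝ (Fin d)) :
      ENNReal.ofReal τ⁻¹ * (logBox d r t).indicator 1 (upperPoint z τ) =
        (Icc (exp (-t)) (exp t)).indicator (fun τ => ENNReal.ofReal τ⁻¹) τ *
          (Metric.closedBall (0 : EuclideanSpace ℝ (Fin d)) r).indicator 1 z := by
    classical
    simp only [indicator_apply, mem_logBox, norm_horizontalPart_upperPoint, upperPoint_last,
      mem_closedBall_zero_iff, Pi.one_apply]
    by_cases hz : ‖z‖ ≤ r <;> by_cases hτ : τ ∈ Icc (exp (-t)) (exp t) <;> simp [hz, hτ]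
  have hsubset : Icc (exp (-t)) (exp t) ⊆ Ioi 0 := fun τ hτ => (exp_pos _).trans_le hτ.1
  have hbox := measurableSet_logBox (d := d) (r := r) (t := t)
  have hball : MeasurableSet (Metric.closedBall (0 : EuclideanSpace ℝ (Fin d)) r) :=
    Metric.isClosed_closedBall.measurableSet
  have hIcc : Measurable ((Icc (exp (-t)) (exp t)).indicator fun τ => ENNReal.ofReal τ⁻¹) :=
    Measurable.indicator (by fun_prop) measurableSet_Icc
  rw [← lintegral_indicator_one hbox, lintegral_upperHaar (by fun_prop),
    setLIntegral_halfSpace (by fun_prop)]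
  simp only [upperPoint_last, hslice]
  simp_rw [lintegral_const_mul _ (measurable_one.indicator hball), lintegral_indicator_one hball]
  rw [lintegral_mul_const _ hIcc, setLIntegral_indicator measurableSet_Icc,
    inter_eq_self_of_subset_left hsubset, setLIntegral_Icc_exp_ofReal_inv ht,
    Measure.addHaar_closedBall' _ _ hr, finrank_euclideanSpace_fin, ← mul_assoc,
    ← ENNReal.ofReal_mul (by positivity), mul_comm (r ^ d)]

lemma upperHaar_logBox_ne_top (hr : 0 ≤ r) (ht : 0 ≤ t) : upperHaar d (logBox d r t) ≠ ⊤ := by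
  rw [upperHaar_logBox hr ht]
  exact ENNReal.mul_ne_top ENNReal.ofReal_ne_top measure_closedBall_lt_top.ne

lemma upperHaar_logBox_pos (hr : 0 < r) (ht : 0 < t) : 0 < upperHaar d (logBox d r t) := by
  rw [upperHaar_logBox hr.le ht.le]
  exact ENNReal.mul_pos (ENNReal.ofReal_pos.2 (by positivity)).ne'
    (Metric.measure_closedBall_pos _ _ one_pos).ne'

lemma upperHaar_logBox_mul (hr : 0 ≤ r) (ht : 0 ≤ t) {c : ℝ} (hc : 0 ≤ c) :
    upperHaar d (logBox d (c * r) (c * t)) =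
      ENNReal.ofReal (c ^ (d + 1)) * upperHaar d (logBox d r t) := by
  rw [upperHaar_logBox (by positivity) (by positivity), upperHaar_logBox hr ht,
    ← mul_assoc (ENNReal.ofReal (c ^ (d + 1))), ← ENNReal.ofReal_mul (by positivity)]
  ring_nf

end LogBox

section Displacement

variable {d : ℕ} {p : EuclideanSpace ℝ (Fin (d + 1))}

/-- `2 sinh (ρ / 2)`, where `ρ` is the hyperbolic distance between `p` and `upperUnit d`. -/
noncomputable def upperDisplacement (p : EuclideanSpace ℝ (Fin (d + 1))) : ℝ :=
  ‖p - upperUnit d‖ / √(p (Fin.last d))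

lemma upperDisplacement_nonneg (p : EuclideanSpace ℝ (Fin (d + 1))) : 0 ≤ upperDisplacement p :=
  div_nonneg (norm_nonneg _) (sqrt_nonneg _)

lemma norm_horizontalPart_le (hp : p ∈ halfSpace d) :
    ‖horizontalPart p‖ ≤ upperDisplacement p * √(p (Fin.last d)) := by
  rw [upperDisplacement, div_mul_cancel₀ _ (sqrt_pos.2 hp).ne']
  exact abs_le_of_sq_le_sq' (by linarith [norm_sub_upperUnit_sq p, sq_nonneg (p (Fin.last d) - 1)])
    (norm_nonneg _) |>.2

lemma abs_sqrt_sub_inv_le_upperDisplacement (hp : p ∈ halfSpace d) :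
    |√(p (Fin.last d)) - (√(p (Fin.last d)))⁻¹| ≤ upperDisplacement p := by
  have hsqrt : 0 < √(p (Fin.last d)) := sqrt_pos.2 hp
  have hsub : √(p (Fin.last d)) - (√(p (Fin.last d)))⁻¹ =
      (p (Fin.last d) - 1) / √(p (Fin.last d)) := by
    rw [sub_div, div_sqrt, one_div]
  rw [hsub, abs_div, abs_of_pos hsqrt, upperDisplacement]
  gcongr
  exact abs_le_of_sq_le_sq (by linarith [norm_sub_upperUnit_sq p, sq_nonneg ‖horizontalPart p‖])
    (norm_nonneg _)

lemma abs_log_le_upperDisplacement (hp : p ∈ halfSpace d) :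
    |log (p (Fin.last d))| ≤ upperDisplacement p := by
  have hsqrt : 0 < √(p (Fin.last d)) := sqrt_pos.2 hp
  have hsinh : |log √(p (Fin.last d))| ≤ |sinh (log √(p (Fin.last d)))| := by
    rw [abs_sinh]
    exact self_le_sinh_iff.2 (abs_nonneg _)
  rw [sinh_log hsqrt, log_sqrt (le_of_lt hp), abs_div, abs_div, abs_two] at hsinh
  linarith [abs_sqrt_sub_inv_le_upperDisplacement hp]

lemma sqrt_le_one_add_upperDisplacement (hp : p ∈ halfSpace d) :
    √(p (Fin.last d)) ≤ 1 + upperDisplacement p := by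
  have hle := (abs_le.1 (abs_sqrt_sub_inv_le_upperDisplacement hp)).2
  rcases le_total 1 √(p (Fin.last d)) with hone | hone
  · linarith [inv_le_one_of_one_le₀ hone]
  · linarith [upperDisplacement_nonneg p]

lemma inv_sqrt_le_one_add_upperDisplacement (hp : p ∈ halfSpace d) :
    (√(p (Fin.last d)))⁻¹ ≤ 1 + upperDisplacement p := by
  have hle := (abs_le.1 (abs_sqrt_sub_inv_le_upperDisplacement hp)).1
  rcases le_total 1 √(p (Fin.last d)) with hone | hone
  · linarith [inv_le_one_of_one_le₀ hone, upperDisplacement_nonneg p]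
  · linarith

end Displacement

section Cutoff

variable {d : ℕ} {t : ℝ} {x p : EuclideanSpace ℝ (Fin (d + 1))}

/-- A gauge whose sublevel sets are comparable to logarithmic boxes. The horizontal scale `t eᵗ`
makes it vary slowly along right multiplication up to the height `eᵗ`. -/
noncomputable def logGauge (t : ℝ) (x : EuclideanSpace ℝ (Fin (d + 1))) : ℝ :=
  (‖horizontalPart x‖ / exp t + |log (x (Fin.last d))|) / t

/-- The cutoff function `(1 - logGauge t)₊` on the half-space. -/
noncomputable def cutoff (d : ℕ) (t : ℝ) : EuclideanSpace ℝ (Fin (d + 1)) → ℝ :=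
  (halfSpace d).indicator fun x => max (1 - logGauge t x) 0

lemma measurable_cutoff : Measurable (cutoff d t) := by
  have := continuous_horizontalPart (d := d)
  refine Measurable.indicator ?_ (measurableSet_halfSpace d)
  unfold logGauge
  fun_prop

lemma cutoff_of_mem (hx : x ∈ halfSpace d) : cutoff d t x = max (1 - logGauge t x) 0 :=
  indicator_of_mem hx _

lemma cutoff_nonneg (x : EuclideanSpace ℝ (Fin (d + 1))) : 0 ≤ cutoff d t x :=
  indicator_nonneg (fun _ _ => le_max_right _ _) x

lemma cutoff_le_one (ht : 0 ≤ t) (x : EuclideanSpace ℝ (Fin (d + 1))) : cutoff d t x ≤ 1 := by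
  refine indicator_le' (fun x _ => max_le (sub_le_self _ ?_) zero_le_one) (fun _ _ => zero_le_one) x
  unfold logGauge
  positivity

lemma mem_logBox_of_cutoff_ne_zero (ht : 0 < t) (hx : cutoff d t x ≠ 0) :
    x ∈ logBox d (t * exp t) t := by
  have hxD : x ∈ halfSpace d := mem_of_indicator_ne_zero hx
  have hgauge : logGauge t x < 1 := by
    by_contra! hle
    exact hx (by rw [cutoff_of_mem hxD, max_eq_right (by linarith)])
  rw [logGauge, div_lt_one ht] at hgauge
  rw [mem_logBox_iff_abs_log_le hxD, ← div_le_iff₀ (exp_pos t)]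
  have : 0 ≤ ‖horizontalPart x‖ / exp t := by positivity
  exact ⟨by linarith [abs_nonneg (log (x (Fin.last d)))], by linarith⟩

lemma half_le_cutoff (ht : 0 < t) (hx : x ∈ logBox d (1 / 4 * (t * exp t)) (1 / 4 * t)) :
    1 / 2 ≤ cutoff d t x := by
  have hxD := logBox_subset_halfSpace hx
  obtain ⟨hnorm, hlog⟩ := (mem_logBox_iff_abs_log_le hxD).1 hx
  have hgauge : logGauge t x ≤ 1 / 2 := by
    rw [← mul_assoc, ← div_le_iff₀ (exp_pos t)] at hnorm
    rw [logGauge, div_le_iff₀ ht]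
    linarith
  rw [cutoff_of_mem hxD]
  exact le_max_of_le_left (by linarith)

lemma tsupport_cutoff_subset (ht : 0 < t) : tsupport (cutoff d t) ⊆ logBox d (t * exp t) t :=
  closure_minimal (fun _ hx => mem_logBox_of_cutoff_ne_zero ht hx) isCompact_logBox.isClosed

lemma lintegral_cutoff_sq_le (ht : 0 < t) :
    ∫⁻ x, ENNReal.ofReal (cutoff d t x ^ 2) ∂upperHaar d ≤
      upperHaar d (logBox d (t * exp t) t) := by
  rw [← lintegral_indicator_one measurableSet_logBox]
  refine lintegral_mono fun x => ?_
  by_cases hx : x ∈ logBox d (t * exp t) t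
  · rw [indicator_of_mem hx, Pi.one_apply, ENNReal.ofReal_le_one]
    exact pow_le_one₀ (cutoff_nonneg x) (cutoff_le_one ht.le x)
  · rw [not_imp_comm.1 (mem_logBox_of_cutoff_ne_zero ht) hx]
    simp

lemma upperHaar_logBox_le_lintegral_cutoff_sq (ht : 0 < t) :
    upperHaar d (logBox d (t * exp t) t) ≤
      ENNReal.ofReal (4 ^ (d + 2)) * ∫⁻ x, ENNReal.ofReal (cutoff d t x ^ 2) ∂upperHaar d := by
  have hmarkov : ENNReal.ofReal (1 / 4) *
      upperHaar d (logBox d (1 / 4 * (t * exp t)) (1 / 4 * t)) ≤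
        ∫⁻ x, ENNReal.ofReal (cutoff d t x ^ 2) ∂upperHaar d := by
    rw [← setLIntegral_const]
    refine (setLIntegral_mono' measurableSet_logBox fun x hx => ?_).trans
      (setLIntegral_le_lintegral _ _)
    exact ENNReal.ofReal_le_ofReal (by nlinarith [half_le_cutoff ht hx])
  rw [upperHaar_logBox_mul (by positivity) ht.le (by norm_num), ← mul_assoc,
    ← ENNReal.ofReal_mul (by norm_num)] at hmarkov
  calc upperHaar d (logBox d (t * exp t) t)
      = ENNReal.ofReal (4 ^ (d + 2)) * (ENNReal.ofReal (1 / 4 * (1 / 4) ^ (d + 1)) *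
          upperHaar d (logBox d (t * exp t) t)) := by
        rw [← mul_assoc, ← ENNReal.ofReal_mul (by positivity), ← pow_succ', ← mul_pow]
        norm_num
    _ ≤ _ := by gcongr

lemma lintegral_cutoff_sq_ne_top (ht : 0 < t) :
    ∫⁻ x, ENNReal.ofReal (cutoff d t x ^ 2) ∂upperHaar d ≠ ⊤ :=
  ((lintegral_cutoff_sq_le ht).trans_lt
    (upperHaar_logBox_ne_top (by positivity) ht.le).lt_top).ne

lemma lintegral_cutoff_sq_pos (ht : 0 < t) :
    0 < ∫⁻ x, ENNReal.ofReal (cutoff d t x ^ 2) ∂upperHaar d :=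
  pos_of_mul_pos_right ((upperHaar_logBox_pos (by positivity) ht).trans_le
    (upperHaar_logBox_le_lintegral_cutoff_sq ht)) zero_le

lemma memLp_cutoff (ht : 0 < t) : MemLp (cutoff d t) 2 (upperHaar d) := by
  rw [memLp_two_iff_integrable_sq measurable_cutoff.aestronglyMeasurable,
    ← lintegral_ofReal_ne_top_iff_integrable
      (measurable_cutoff.pow_const 2).aestronglyMeasurable
      (Eventually.of_forall fun x => sq_nonneg _)]
  exact lintegral_cutoff_sq_ne_top ht

lemma abs_logGauge_sub_le (ht : 0 < t) (hx : x ∈ halfSpace d) (hp : p ∈ halfSpace d) :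
    |logGauge t x - logGauge t (upperMul x p)| ≤
      (x (Fin.last d) / exp t * ‖horizontalPart p‖ + |log (p (Fin.last d))|) / t := by
  have hx0 : 0 < x (Fin.last d) := hx
  have hp0 : 0 < p (Fin.last d) := hp
  have hnorm : |‖horizontalPart x‖ - ‖horizontalPart (upperMul x p)‖| ≤
      x (Fin.last d) * ‖horizontalPart p‖ := by
    refine (abs_norm_sub_norm_le _ _).trans_eq ?_
    rw [horizontalPart_upperMul, sub_add_cancel_left, norm_neg, norm_smul, norm_of_nonneg hx0.le]
  have hlog : |(|log (x (Fin.last d))| - |log (upperMul x p (Fin.last d))|)| ≤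
      |log (p (Fin.last d))| := by
    refine (abs_abs_sub_abs_le _ _).trans_eq ?_
    rw [upperMul_last, log_mul hx0.ne' hp0.ne', sub_add_cancel_left, abs_neg]
  rw [logGauge, logGauge, ← sub_div, abs_div, abs_of_pos ht, add_sub_add_comm, ← sub_div]
  gcongr
  refine (abs_add_le _ _).trans (add_le_add ?_ hlog)
  rw [abs_div, abs_of_pos (exp_pos t), div_mul_eq_mul_div]
  gcongr

lemma div_exp_mul_norm_horizontalPart_le (hp : p ∈ halfSpace d)
    (hx : x (Fin.last d) ≤ exp t ∨ upperMul x p (Fin.last d) ≤ exp t) :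
    x (Fin.last d) / exp t * ‖horizontalPart p‖ ≤
      upperDisplacement p * (1 + upperDisplacement p) := by
  have hp0 : 0 < p (Fin.last d) := hp
  have hm := upperDisplacement_nonneg p
  rcases hx with hle | hle
  · calc x (Fin.last d) / exp t * ‖horizontalPart p‖
        ≤ 1 * (upperDisplacement p * √(p (Fin.last d))) := by
          gcongr
          exacts [(div_le_one (exp_pos t)).2 hle, norm_horizontalPart_le hp]
      _ ≤ upperDisplacement p * (1 + upperDisplacement p) := by
          rw [one_mul]
          gcongr
          exact sqrt_le_one_add_upperDisplacement hp
  · rw [upperMul_last] at hle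
    calc x (Fin.last d) / exp t * ‖horizontalPart p‖
        ≤ (p (Fin.last d))⁻¹ * (upperDisplacement p * √(p (Fin.last d))) := by
          gcongr
          exacts [by rwa [div_le_iff₀ (exp_pos t), ← div_eq_inv_mul, le_div_iff₀ hp0],
            norm_horizontalPart_le hp]
      _ = upperDisplacement p * (√(p (Fin.last d)))⁻¹ := by
          rw [mul_left_comm, ← div_eq_inv_mul, sqrt_div_self]
      _ ≤ upperDisplacement p * (1 + upperDisplacement p) := by
          gcongr
          exact inv_sqrt_le_one_add_upperDisplacement hp

lemma abs_cutoff_sub_le (ht : 0 < t) (hx : x ∈ halfSpace d) (hp : p ∈ halfSpace d)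
    (hbox : x ∈ logBox d (t * exp t) t ∨ upperMul x p ∈ logBox d (t * exp t) t) :
    |cutoff d t x - cutoff d t (upperMul x p)| ≤
      upperDisplacement p * (2 + upperDisplacement p) / t := by
  have hxp : upperMul x p ∈ halfSpace d := (preimage_upperMul_left hx).ge hp
  have hhorizontal := div_exp_mul_norm_horizontalPart_le (t := t) hp
    (hbox.imp (fun h => h.2.2) (fun h => h.2.2))
  calc |cutoff d t x - cutoff d t (upperMul x p)|
      ≤ |logGauge t x - logGauge t (upperMul x p)| := by
        rw [cutoff_of_mem hx, cutoff_of_mem hxp]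
        refine (abs_max_sub_max_le_abs _ _ _).trans_eq ?_
        rw [sub_sub_sub_cancel_left, abs_sub_comm]
    _ ≤ (x (Fin.last d) / exp t * ‖horizontalPart p‖ + |log (p (Fin.last d))|) / t :=
        abs_logGauge_sub_le ht hx hp
    _ ≤ upperDisplacement p * (2 + upperDisplacement p) / t := by
        gcongr
        linarith [abs_log_le_upperDisplacement hp]

lemma lintegral_cutoff_sub_sq_le (ht : 0 < t) (hp : p ∈ halfSpace d) :
    ∫⁻ x, ENNReal.ofReal ((cutoff d t x - cutoff d t (upperMul x p)) ^ 2) ∂upperHaar d ≤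
      ENNReal.ofReal ((upperDisplacement p * (2 + upperDisplacement p) / t) ^ 2) *
        (2 * upperHaar d (logBox d (t * exp t) t)) := by
  set B := logBox d (t * exp t) t
  have hpointwise : ∀ᵐ x ∂upperHaar d,
      ENNReal.ofReal ((cutoff d t x - cutoff d t (upperMul x p)) ^ 2) ≤
        ENNReal.ofReal ((upperDisplacement p * (2 + upperDisplacement p) / t) ^ 2) *
          (B.indicator 1 x + B.indicator 1 (upperMul x p)) := by
    filter_upwards [ae_upperHaar_mem d] with x hx
    by_cases hbox : x ∈ B ∨ upperMul x p ∈ B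
    · have hone : (1 : ENNReal) ≤ B.indicator 1 x + B.indicator 1 (upperMul x p) := by
        rcases hbox with h | h
        · exact (indicator_of_mem h 1).ge.trans le_self_add
        · exact (indicator_of_mem h 1).ge.trans le_add_self
      refine le_mul_of_le_of_one_le (ENNReal.ofReal_le_ofReal ?_) hone
      exact sq_le_sq' (abs_le.1 (abs_cutoff_sub_le ht hx hp hbox)).1
        (abs_le.1 (abs_cutoff_sub_le ht hx hp hbox)).2
    · rw [not_or] at hbox
      rw [not_imp_comm.1 (mem_logBox_of_cutoff_ne_zero ht) hbox.1,
        not_imp_comm.1 (mem_logBox_of_cutoff_ne_zero ht) hbox.2]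
      simp
  have hmeas : Measurable (B.indicator (1 : EuclideanSpace ℝ (Fin (d + 1)) → ENNReal)) :=
    measurable_one.indicator measurableSet_logBox
  refine (lintegral_mono_ae hpointwise).trans_eq ?_
  rw [lintegral_const_mul' _ _ ENNReal.ofReal_ne_top, lintegral_add_left hmeas,
    (measurePreserving_upperMul_right hp).lintegral_comp hmeas,
    lintegral_indicator_one measurableSet_logBox, two_mul]

end Cutoff

section Remainder

variable {d : ℕ} {α q t : ℝ} {p : EuclideanSpace ℝ (Fin (d + 1))}

lemma sq_mul_two_add_div_le_rpow {m : ℝ} (hm : 0 ≤ m) (ht : 1 ≤ t) (hle : m / √t ≤ 1)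
    (hq0 : 0 ≤ q) (hq2 : q ≤ 2) : (m * (2 + m) / t) ^ 2 ≤ 9 * (m / √t) ^ q := by
  have ht0 : 0 < t := one_pos.trans_le ht
  have hsplit : m * (2 + m) / t = 2 * (m / √t) / √t + (m / √t) ^ 2 := by
    rw [div_pow, sq_sqrt ht0.le, ← mul_div_assoc, div_div, mul_self_sqrt ht0.le]
    ring
  have hs : 0 ≤ m / √t := by positivity
  have hlinear : m * (2 + m) / t ≤ 3 * (m / √t) := by
    have hdiv : 2 * (m / √t) / √t ≤ 2 * (m / √t) := div_le_self (by positivity) (one_le_sqrt.2 ht)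
    nlinarith
  calc (m * (2 + m) / t) ^ 2 ≤ (3 * (m / √t)) ^ 2 := by gcongr
    _ = 9 * (m / √t) ^ (2 : ℝ) := by
        rw [rpow_two]
        ring
    _ ≤ 9 * (m / √t) ^ q := by
        gcongr 9 * ?_
        exact rpow_le_rpow_of_exponent_ge' hs hle hq0 hq2

lemma lintegral_cutoff_sub_sq_le_rpow (ht : 1 ≤ t) (hp : p ∈ halfSpace d) (hq0 : 0 ≤ q)
    (hq2 : q ≤ 2) :
    ∫⁻ x, ENNReal.ofReal ((cutoff d t x - cutoff d t (upperMul x p)) ^ 2) ∂upperHaar d ≤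
      ENNReal.ofReal (18 * 4 ^ (d + 2) * (upperDisplacement p / √t) ^ q) *
        ∫⁻ x, ENNReal.ofReal (cutoff d t x ^ 2) ∂upperHaar d := by
  have ht0 : 0 < t := one_pos.trans_le ht
  have hm := upperDisplacement_nonneg p
  rcases le_total (upperDisplacement p / √t) 1 with hle | hge
  · calc ∫⁻ x, ENNReal.ofReal ((cutoff d t x - cutoff d t (upperMul x p)) ^ 2) ∂upperHaar d
        ≤ ENNReal.ofReal ((upperDisplacement p * (2 + upperDisplacement p) / t) ^ 2) *
            (2 * (ENNReal.ofReal (4 ^ (d + 2)) *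
              ∫⁻ x, ENNReal.ofReal (cutoff d t x ^ 2) ∂upperHaar d)) :=
          (lintegral_cutoff_sub_sq_le ht0 hp).trans
            (by gcongr; exact upperHaar_logBox_le_lintegral_cutoff_sq ht0)
      _ ≤ ENNReal.ofReal (9 * (upperDisplacement p / √t) ^ q) *
            (ENNReal.ofReal 2 * (ENNReal.ofReal (4 ^ (d + 2)) *
              ∫⁻ x, ENNReal.ofReal (cutoff d t x ^ 2) ∂upperHaar d)) := by
          rw [ENNReal.ofReal_ofNat]
          gcongr
          exact sq_mul_two_add_div_le_rpow hm ht hle hq0 hq2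
      _ = _ := by
          rw [← mul_assoc, ← mul_assoc, ← ENNReal.ofReal_mul (by positivity),
            ← ENNReal.ofReal_mul (by positivity)]
          ring_nf
  · refine (lintegral_sub_comp_sq_le (measurePreserving_upperMul_right hp)
      measurable_cutoff).trans ?_
    rw [← ENNReal.ofReal_ofNat 4]
    gcongr
    have hone : 1 ≤ (upperDisplacement p / √t) ^ q := one_le_rpow hge hq0
    have hpow : (1 : ℝ) ≤ 4 ^ (d + 2) := one_le_pow₀ (by norm_num)
    nlinarith [one_le_mul_of_one_le_of_one_le hpow hone]

lemma norm_sub_upperUnit_rpow_mul_upperDisplacement_rpow (hp : p ∈ halfSpace d)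
    (hq : q < 1 + α) :
    ‖p - upperUnit d‖ ^ (-((d : ℝ) + 1 + α)) * p (Fin.last d) ^ ((α - 1) / 2) *
        upperDisplacement p ^ q =
      ‖p - upperUnit d‖ ^ (-((d : ℝ) + 1 + α - q)) * p (Fin.last d) ^ ((α + 1 - q) / 2 - 1) := by
  have hp0 : 0 < p (Fin.last d) := hp
  have : (0 : ℝ) ≤ d := d.cast_nonneg
  have hnorm : ‖p - upperUnit d‖ ^ (-((d : ℝ) + 1 + α - q)) =
      ‖p - upperUnit d‖ ^ (-((d : ℝ) + 1 + α)) * ‖p - upperUnit d‖ ^ q := by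
    rw [← rpow_add' (norm_nonneg _) (by linarith)]
    ring_nf
  have hlast : p (Fin.last d) ^ ((α + 1 - q) / 2 - 1) =
      p (Fin.last d) ^ ((α - 1) / 2) / √(p (Fin.last d)) ^ q := by
    rw [sqrt_eq_rpow, ← rpow_mul hp0.le, ← rpow_sub hp0]
    ring_nf
  rw [upperDisplacement, div_rpow (norm_nonneg _) (sqrt_nonneg _), hnorm, hlast]
  ring

lemma setLIntegral_upperDisplacement_rpow_ne_top (hqα : α < q) (hq : q < 1 + α) :
    ∫⁻ p in halfSpace d,
      ENNReal.ofReal (‖p - upperUnit d‖ ^ (-((d : ℝ) + 1 + α)) *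
        p (Fin.last d) ^ ((α - 1) / 2)) * ENNReal.ofReal (upperDisplacement p ^ q) ≠ ⊤ := by
  have hcongr : ∀ p ∈ halfSpace d,
      ENNReal.ofReal (‖p - upperUnit d‖ ^ (-((d : ℝ) + 1 + α)) *
        p (Fin.last d) ^ ((α - 1) / 2)) * ENNReal.ofReal (upperDisplacement p ^ q) =
      ENNReal.ofReal (‖p - upperUnit d‖ ^ (-((d : ℝ) + 1 + α - q))) *
        ENNReal.ofReal (p (Fin.last d) ^ ((α + 1 - q) / 2 - 1)) := fun p hp => by
    have := rpow_nonneg (le_of_lt hp : 0 ≤ p (Fin.last d)) ((α - 1) / 2)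
    rw [← ENNReal.ofReal_mul (by positivity), ← ENNReal.ofReal_mul (by positivity),
      norm_sub_upperUnit_rpow_mul_upperDisplacement_rpow hp hq]
  have hbeta : ∫⁻ τ in Ioi (0 : ℝ), ENNReal.ofReal (|τ - 1| ^ ((d : ℝ) - (d + 1 + α - q))) *
      ENNReal.ofReal (τ ^ ((α + 1 - q) / 2 - 1)) ≠ ⊤ := by
    have hval := lintegral_rpow_mul_abs_sub_one_rpow (a := (α + 1 - q) / 2) (b := q - α)
      (by linarith) (by linarith) (by linarith)
    have hfin := hval.trans_ne ENNReal.ofReal_ne_top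
    refine (lintegral_congr fun τ => ?_).trans_ne hfin
    rw [← ENNReal.ofReal_mul (by positivity), mul_comm]
    ring_nf
  rw [setLIntegral_congr_fun (measurableSet_halfSpace d) hcongr,
    setLIntegral_norm_sub_upperUnit_rpow_mul (by linarith)
      (g := fun τ => ENNReal.ofReal (τ ^ ((α + 1 - q) / 2 - 1))) (by fun_prop)]
  exact ENNReal.mul_ne_top ENNReal.ofReal_ne_top hbeta

lemma exists_forall_fractionalEnergy_cutoff_le (d : ℕ) (hα0 : 0 < α) (hα2 : α < 2) :
    ∃ C : ℝ, ∀ t, 1 ≤ t → fractionalEnergy α (groundStateMul α (cutoff d t)) ≤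
      ENNReal.ofReal (2 * kappa (d + 1) α + C * √t ^ (-(1 + α / 2))) *
        ∫⁻ x, ENNReal.ofReal (cutoff d t x ^ 2) ∂upperHaar d := by
  set J := ∫⁻ p in halfSpace d,
    ENNReal.ofReal (‖p - upperUnit d‖ ^ (-((d : ℝ) + 1 + α)) * p (Fin.last d) ^ ((α - 1) / 2)) *
      ENNReal.ofReal (upperDisplacement p ^ (1 + α / 2))
  have hJ_ne_top : J ≠ ⊤ :=
    setLIntegral_upperDisplacement_rpow_ne_top (by linarith) (by linarith)
  have hκ := kappa_succ_nonneg d hα0 hα2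
  refine ⟨18 * 4 ^ (d + 2) * J.toReal, fun t ht => ?_⟩
  have ht0 : 0 < t := one_pos.trans_le ht
  set N := ∫⁻ x, ENNReal.ofReal (cutoff d t x ^ 2) ∂upperHaar d
  rw [fractionalEnergy_groundStateMul hα0 hα2 measurable_cutoff (memLp_cutoff ht0),
    ENNReal.ofReal_add (by positivity) (by positivity), add_mul]
  gcongr
  set c := 18 * 4 ^ (d + 2) * √t ^ (-(1 + α / 2)) with hc
  have hc0 : 0 ≤ c := by positivity
  calc _ ≤ ∫⁻ p in halfSpace d, ENNReal.ofReal c * N *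
        (ENNReal.ofReal (‖p - upperUnit d‖ ^ (-((d : ℝ) + 1 + α)) *
          p (Fin.last d) ^ ((α - 1) / 2)) *
            ENNReal.ofReal (upperDisplacement p ^ (1 + α / 2))) := by
        refine setLIntegral_mono' (measurableSet_halfSpace d) fun p hp => ?_
        have hpow : 18 * 4 ^ (d + 2) * (upperDisplacement p / √t) ^ (1 + α / 2) =
            c * upperDisplacement p ^ (1 + α / 2) := by
          rw [hc, div_rpow (upperDisplacement_nonneg p) (sqrt_nonneg t), rpow_neg (sqrt_nonneg t)]
          ring
        have hbound := lintegral_cutoff_sub_sq_le_rpow (q := 1 + α / 2) ht hp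
          (by linarith) (by linarith)
        rw [hpow, ENNReal.ofReal_mul hc0] at hbound
        grw [hbound]
        exact le_of_eq (by ring)
    _ = ENNReal.ofReal c * N * J :=
        lintegral_const_mul' _ _
          (ENNReal.mul_ne_top ENNReal.ofReal_ne_top (lintegral_cutoff_sq_ne_top ht0))
    _ = _ := by
        rw [mul_right_comm _ J.toReal, ← hc, ENNReal.ofReal_mul hc0,
          ENNReal.ofReal_toReal hJ_ne_top, mul_right_comm]

lemma exists_fractionalEnergy_cutoff_le (hα0 : 0 < α) (hα2 : α < 2) {c : ℝ}
    (hc : 2 * kappa (d + 1) α < c) :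
    ∃ t > 0, fractionalEnergy α (groundStateMul α (cutoff d t)) ≤
      ENNReal.ofReal c * ∫⁻ x, ENNReal.ofReal (cutoff d t x ^ 2) ∂upperHaar d := by
  obtain ⟨C, henergy⟩ := exists_forall_fractionalEnergy_cutoff_le d hα0 hα2
  have hlim : Tendsto (fun t : ℝ => 2 * kappa (d + 1) α + C * √t ^ (-(1 + α / 2))) atTop
      (𝓝 (2 * kappa (d + 1) α)) := by
    have hpow : Tendsto (fun t : ℝ => √t ^ (-(1 + α / 2))) atTop (𝓝 0) :=
      (tendsto_rpow_neg_atTop (by linarith)).comp tendsto_sqrt_atTop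
    simpa using (hpow.const_mul C).const_add (2 * kappa (d + 1) α)
  obtain ⟨t, hlt, ht⟩ := ((hlim.eventually_lt_const hc).and (eventually_ge_atTop 1)).exists
  refine ⟨t, one_pos.trans_le ht, (henergy t ht).trans ?_⟩
  gcongr

end Remainder

section TestFunction

variable {d : ℕ} {α t : ℝ}

lemma tsupport_groundStateMul_subset (α : ℝ) (v : EuclideanSpace ℝ (Fin (d + 1)) → ℝ) :
    tsupport (groundStateMul α v) ⊆ tsupport v :=
  tsupport_mul_subset_right

lemma tsupport_groundStateMul_cutoff_subset (ht : 0 < t) :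
    tsupport (groundStateMul α (cutoff d t)) ⊆ logBox d (t * exp t) t :=
  (tsupport_groundStateMul_subset α _).trans (tsupport_cutoff_subset ht)

lemma continuous_groundStateMul_cutoff (ht : 0 < t) :
    Continuous (groundStateMul α (cutoff d t)) := by
  refine continuous_of_tsupport fun x hx => ?_
  have hxD := logBox_subset_halfSpace (tsupport_groundStateMul_cutoff_subset ht hx)
  have hx0 : x (Fin.last d) ≠ 0 := (mem_halfSpace.1 hxD).ne'
  have hopen : IsOpen (halfSpace d) := isOpen_lt continuous_const (by fun_prop)
  have hlast : ContinuousAt (fun x : EuclideanSpace ℝ (Fin (d + 1)) => x (Fin.last d)) x := by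
    fun_prop
  have hcutoff : ContinuousAt (fun x => max (1 - logGauge t x) 0) x :=
    (continuousAt_const.sub ((((continuous_horizontalPart.norm.div_const _).continuousAt).add
      (hlast.log hx0).abs).div_const t)).max continuousAt_const
  refine (hlast.rpow_const (.inl hx0)).mul (hcutoff.congr ?_)
  filter_upwards [hopen.mem_nhds hxD] with y hy
  exact (cutoff_of_mem hy).symm

lemma integral_groundStateMul_sq_mul_rpow {v : EuclideanSpace ℝ (Fin (d + 1)) → ℝ}
    (hv : Measurable v) :
    ∫ x in halfSpace d, groundStateMul α v x ^ 2 * x (Fin.last d) ^ (-α) =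
      (∫⁻ x, ENNReal.ofReal (v x ^ 2) ∂upperHaar d).toReal := by
  have hu := measurable_groundStateMul (α := α) hv
  have hnonneg : ∀ᵐ x ∂volume.restrict (halfSpace d),
      0 ≤ groundStateMul α v x ^ 2 * x (Fin.last d) ^ (-α) := by
    filter_upwards [self_mem_ae_restrict (measurableSet_halfSpace d)] with x hx
    exact mul_nonneg (sq_nonneg _) (rpow_nonneg (le_of_lt hx) _)
  rw [integral_eq_lintegral_of_nonneg_ae hnonneg (Measurable.aestronglyMeasurable (by fun_prop)),
    lintegral_upperHaar (by fun_prop)]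
  congr 1
  refine setLIntegral_congr_fun (measurableSet_halfSpace d) fun x hx => ?_
  rw [groundStateMul_sq_mul_rpow v hx, ENNReal.ofReal_mul (inv_nonneg.2 (le_of_lt hx))]

end TestFunction

end FractionalHardy

open FractionalHardy

theorem fractional_hardy_halfspace_optimal (d : ℕ) (α : ℝ) (hα0 : 0 < α) (hα2 : α < 2)
    (K : ℝ) (hK : kappa (d + 1) α < K) :
    ∃ u : EuclideanSpace ℝ (Fin (d + 1)) → ℝ, Continuous u ∧ HasCompactSupport u ∧
      tsupport u ⊆ halfSpace d ∧
      (1 / 2) * ∫ x in halfSpace d, ∫ y in halfSpace d,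
          (u x - u y) ^ 2 / ‖x - y‖ ^ ((d : ℝ) + 1 + α) <
        K * ∫ x in halfSpace d, u x ^ 2 * x (Fin.last d) ^ (-α) := by
  obtain ⟨c, hκc, hcK⟩ := exists_between hK
  obtain ⟨t, ht, henergy⟩ := exists_fractionalEnergy_cutoff_le hα0 hα2 (c := 2 * c) (by linarith)
  have hκ := kappa_succ_nonneg d hα0 hα2
  have hmass_fin := lintegral_cutoff_sq_ne_top (d := d) ht
  have hmass_pos := ENNReal.toReal_pos (lintegral_cutoff_sq_pos (d := d) ht).ne' hmass_fin
  have hbound_fin := ENNReal.mul_ne_top (ENNReal.ofReal_ne_top (r := 2 * c)) hmass_fin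
  have hsupport := tsupport_groundStateMul_cutoff_subset (d := d) (α := α) ht
  refine ⟨groundStateMul α (cutoff d t), continuous_groundStateMul_cutoff ht,
    isCompact_logBox.of_isClosed_subset (isClosed_tsupport _) hsupport,
    hsupport.trans logBox_subset_halfSpace, ?_⟩
  have hreal := (integral_integral_le_toReal_fractionalEnergy
    (measurable_groundStateMul measurable_cutoff) (ne_top_of_le_ne_top hbound_fin henergy)).trans
    (ENNReal.toReal_mono hbound_fin henergy)
  rw [ENNReal.toReal_mul, ENNReal.toReal_ofReal (by linarith)] at hreal
  rw [integral_groundStateMul_sq_mul_rpow measurable_cutoff]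
  linarith [mul_lt_mul_of_pos_right hcK hmass_pos]
end

section
/- Let 0 < α < 2, d ≥ 1, and D = {x ∈ ℝ^d : x_d > 0}. For every x ∈ D, ∫_{D^c} |x − y|^{−d−α} dy = (1/α)·[π^{(d−1)/2} Γ((1+α)/2) / Γ((α+d)/2)]·x_d^{−α}, where D^c = ℝ^d \ D. -/
/-!
Let `e` be the inner unit normal of the half-space. The substitution `z = x - y` turns the integral
into that of `‖z‖ ^ (-n - α)` over `{z | c ≤ ⟪e, z⟫}`, where `c = ⟪e, x⟫` is the distance from `x`
to the boundary. Slice by the hyperplanes `⟪e, z⟫ = s`, `s ≥ c`: as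
`‖s • e + v‖ ^ 2 = ‖v‖ ^ 2 + s ^ 2` for `v ⟂ e`, each slice is an integral of
`(‖v‖ ^ 2 + s ^ 2) ^ (-p)`. Writing this power as a Gamma integral of `exp (-(‖v‖ ^ 2 + s ^ 2) * t)`
makes the slice Gaussian; it is a constant multiple of `s ^ (-1 - α)`, which is elementary to
integrate over `s ≥ c`.
-/

open MeasureTheory Real Set

open Module
open scoped RealInnerProductSpace

theorem lintegral_ofReal_eq_of_integral_eq {X : Type*} [MeasurableSpace X] {μ : Measure X}
    {f : X → ℝ} {c : ℝ} (hf : 0 ≤ᵐ[μ] f) (hc : c ≠ 0) (h : ∫ x, f x ∂μ = c) :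
    ∫⁻ x, ENNReal.ofReal (f x) ∂μ = ENNReal.ofReal c := by
  rw [← h, ofReal_integral_eq_lintegral_ofReal (.of_integral_ne_zero (h ▸ hc)) hf]

theorem lintegral_rpow_mul_exp_neg_mul_Ioi {a r : ℝ} (ha : 0 < a) (hr : 0 < r) :
    ∫⁻ t in Ioi 0, ENNReal.ofReal (t ^ (a - 1) * exp (-(r * t))) =
      ENNReal.ofReal (r ^ (-a) * Gamma a) := by
  have : 0 < Gamma a := Gamma_pos_of_pos ha
  refine lintegral_ofReal_eq_of_integral_eq ?_ (by positivity) ?_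
  · filter_upwards [ae_restrict_mem measurableSet_Ioi] with t ht
    have : 0 < t := ht
    positivity
  · rw [integral_rpow_mul_exp_neg_mul_Ioi ha hr, one_div, inv_rpow hr.le, rpow_neg hr.le]

theorem lintegral_Ici_rpow {a c : ℝ} (ha : a < -1) (hc : 0 < c) :
    ∫⁻ s in Ici c, ENNReal.ofReal (s ^ a) = ENNReal.ofReal (-c ^ (a + 1) / (a + 1)) := by
  rw [setLIntegral_congr Ioi_ae_eq_Ici.symm, ← integral_Ioi_rpow_of_lt ha hc,
    ofReal_integral_eq_lintegral_ofReal (integrableOn_Ioi_rpow_of_lt ha hc)]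
  filter_upwards [ae_restrict_mem measurableSet_Ioi] with s hs
  exact rpow_nonneg (hc.trans hs).le a

theorem ofReal_rpow_neg_eq_lintegral_rpow_mul_exp {p r : ℝ} (hp : 0 < p) (hr : 0 < r) :
    ENNReal.ofReal (r ^ (-p)) = ENNReal.ofReal (Gamma p)⁻¹ *
      ∫⁻ t in Ioi 0, ENNReal.ofReal (t ^ (p - 1) * exp (-(r * t))) := by
  have : 0 < Gamma p := Gamma_pos_of_pos hp
  rw [lintegral_rpow_mul_exp_neg_mul_Ioi hp hr, ← ENNReal.ofReal_mul (by positivity)]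
  congr 1
  field_simp

/-- The integral of `‖z‖ ^ (-n - α)` over an affine hyperplane at distance one from the origin of
an `n`-dimensional Euclidean space; see `lintegral_orthogonal_norm_smul_add_rpow`. The dimension `n`
is taken real to avoid casts. -/
noncomputable def hyperplaneKernelConst (n α : ℝ) : ℝ :=
  π ^ ((n - 1) / 2) * Gamma ((1 + α) / 2) / Gamma ((α + n) / 2)

theorem hyperplaneKernelConst_nonneg {n α : ℝ} (hα : 0 ≤ 1 + α) (hn : 0 ≤ α + n) :
    0 ≤ hyperplaneKernelConst n α :=
  div_nonneg (mul_nonneg (by positivity) (Gamma_nonneg_of_nonneg (by positivity)))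
    (Gamma_nonneg_of_nonneg (by positivity))

section InnerProductSpace

variable {E : Type*} [NormedAddCommGroup E] [InnerProductSpace ℝ E] [FiniteDimensional ℝ E]
  [MeasurableSpace E] [BorelSpace E]

variable (E) in
theorem lintegral_exp_neg_mul_norm_sq {b : ℝ} (hb : 0 < b) :
    ∫⁻ v : E, ENNReal.ofReal (exp (-b * ‖v‖ ^ 2)) =
      ENNReal.ofReal ((π / b) ^ (finrank ℝ E / 2 : ℝ)) :=
  lintegral_ofReal_eq_of_integral_eq (ae_of_all _ fun _ ↦ (exp_pos _).le) (by positivity)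
    (GaussianFourier.integral_rexp_neg_mul_sq_norm hb)

variable (E) in
theorem lintegral_rpow_mul_exp_neg_norm_sq_add_mul (p b : ℝ) {t : ℝ} (ht : 0 < t) :
    ∫⁻ v : E, ENNReal.ofReal (t ^ (p - 1) * exp (-((‖v‖ ^ 2 + b) * t))) =
      ENNReal.ofReal (π ^ (finrank ℝ E / 2 : ℝ)) *
        ENNReal.ofReal (t ^ (p - finrank ℝ E / 2 - 1) * exp (-(b * t))) := by
  have factor (v : E) : t ^ (p - 1) * exp (-((‖v‖ ^ 2 + b) * t)) =
      t ^ (p - 1) * exp (-(b * t)) * exp (-t * ‖v‖ ^ 2) := by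
    rw [mul_assoc, ← exp_add]
    ring_nf
  simp_rw [factor, ENNReal.ofReal_mul (show 0 ≤ t ^ (p - 1) * exp (-(b * t)) by positivity)]
  rw [lintegral_const_mul' _ _ ENNReal.ofReal_ne_top, lintegral_exp_neg_mul_norm_sq E ht,
    ← ENNReal.ofReal_mul (by positivity), ← ENNReal.ofReal_mul (by positivity),
    div_rpow pi_pos.le ht.le, sub_right_comm p _ 1, rpow_sub ht (p - 1)]
  congr 1
  ring

variable (E) in
theorem lintegral_norm_sq_add_rpow_neg {p b : ℝ} (hp : (finrank ℝ E / 2 : ℝ) < p) (hb : 0 < b) :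
    ∫⁻ v : E, ENNReal.ofReal ((‖v‖ ^ 2 + b) ^ (-p)) =
      ENNReal.ofReal (π ^ (finrank ℝ E / 2 : ℝ) * Gamma (p - finrank ℝ E / 2) / Gamma p *
        b ^ (finrank ℝ E / 2 - p)) := by
  have hp0 : 0 < p := lt_of_le_of_lt (by positivity) hp
  have : 0 < Gamma p := Gamma_pos_of_pos hp0
  simp_rw [fun v : E ↦ ofReal_rpow_neg_eq_lintegral_rpow_mul_exp hp0
    (show 0 < ‖v‖ ^ 2 + b by positivity)]
  rw [lintegral_const_mul' _ _ ENNReal.ofReal_ne_top, lintegral_lintegral_swap (by fun_prop),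
    setLIntegral_congr_fun measurableSet_Ioi fun t (ht : 0 < t) ↦
      lintegral_rpow_mul_exp_neg_norm_sq_add_mul E p b ht,
    lintegral_const_mul' _ _ ENNReal.ofReal_ne_top,
    lintegral_rpow_mul_exp_neg_mul_Ioi (sub_pos.2 hp) hb,
    ← ENNReal.ofReal_mul (by positivity), ← ENNReal.ofReal_mul (by positivity), neg_sub]
  congr 1
  ring

theorem measurePreserving_smul_add_orthogonal {e : E} (he : ‖e‖ = 1) :
    MeasurePreserving (fun p : ℝ × (ℝ ∙ e)ᗮ ↦ p.1 • e + (p.2 : E)) := by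
  have hline : MeasurePreserving (LinearIsometryEquiv.toSpanUnitSingleton (𝕜 := ℝ) e he) :=
    LinearIsometryEquiv.measurePreserving _
  exact ((ℝ ∙ e).orthogonalDecomposition.symm.measurePreserving.comp
    (WithLp.volume_preserving_toLp _ _)).comp (hline.prod (.id volume))

theorem setLIntegral_inner_mem_eq {e : E} (he : ‖e‖ = 1) {S : Set ℝ} (hS : MeasurableSet S)
    {f : E → ENNReal} (hf : Measurable f) :
    ∫⁻ z in {z | ⟪e, z⟫ ∈ S}, f z = ∫⁻ s in S, ∫⁻ v : (ℝ ∙ e)ᗮ, f (s • e + v) := by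
  have hpre : (fun p : ℝ × (ℝ ∙ e)ᗮ ↦ p.1 • e + (p.2 : E)) ⁻¹' {z | ⟪e, z⟫ ∈ S} = S ×ˢ univ := by
    ext ⟨s, v⟩
    simp [inner_add_right, inner_smul_right, he,
      Submodule.mem_orthogonal_singleton_iff_inner_right.1 v.2]
  have hmeas : MeasurableSet {z | ⟪e, z⟫ ∈ S} := hS.preimage (by fun_prop)
  rw [← (measurePreserving_smul_add_orthogonal he).setLIntegral_comp_preimage hmeas hf, hpre,
    Measure.volume_eq_prod, setLIntegral_prod _ (by fun_prop)]
  simp only [Measure.restrict_univ]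

theorem lintegral_orthogonal_norm_smul_add_rpow {e : E} (he : ‖e‖ = 1) {α s : ℝ} (hα : -1 < α)
    (hs : 0 < s) :
    ∫⁻ v : (ℝ ∙ e)ᗮ, ENNReal.ofReal (‖s • e + (v : E)‖ ^ (-(finrank ℝ E : ℝ) - α)) =
      ENNReal.ofReal (hyperplaneKernelConst (finrank ℝ E) α * s ^ (-1 - α)) := by
  have hdim : (finrank ℝ E : ℝ) = finrank ℝ (ℝ ∙ e)ᗮ + 1 := by
    rw [← (ℝ ∙ e).finrank_add_finrank_orthogonal,
      finrank_span_singleton (norm_ne_zero_iff.1 (he ▸ one_ne_zero)), add_comm]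
    norm_cast
  have pythagoras (v : (ℝ ∙ e)ᗮ) : ‖s • e + (v : E)‖ ^ 2 = ‖v‖ ^ 2 + s ^ 2 := by
    rw [norm_add_sq_real, inner_smul_left,
      Submodule.mem_orthogonal_singleton_iff_inner_right.1 v.2, norm_smul, he]
    simp [add_comm]
  have norm_rpow (v : (ℝ ∙ e)ᗮ) : ‖s • e + (v : E)‖ ^ (-(finrank ℝ E : ℝ) - α) =
      (‖v‖ ^ 2 + s ^ 2) ^ (-((α + finrank ℝ E) / 2)) := by
    rw [← pythagoras, ← rpow_natCast, ← rpow_mul (norm_nonneg _)]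
    congr 1
    push_cast
    ring
  simp_rw [norm_rpow]
  rw [lintegral_norm_sq_add_rpow_neg _ (by linarith) (by positivity), ← rpow_natCast,
    ← rpow_mul hs.le, hyperplaneKernelConst, hdim]
  ring_nf

theorem setLIntegral_norm_rpow_le_inner {e : E} (he : ‖e‖ = 1) {α c : ℝ} (hα : 0 < α)
    (hc : 0 < c) :
    ∫⁻ z in {z | c ≤ ⟪e, z⟫}, ENNReal.ofReal (‖z‖ ^ (-(finrank ℝ E : ℝ) - α)) =
      ENNReal.ofReal (1 / α * hyperplaneKernelConst (finrank ℝ E) α * c ^ (-α)) := by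
  have hconst : 0 ≤ hyperplaneKernelConst (finrank ℝ E) α :=
    hyperplaneKernelConst_nonneg (by positivity) (by positivity)
  change ∫⁻ z in {z | ⟪e, z⟫ ∈ Ici c}, _ = _
  rw [setLIntegral_inner_mem_eq he measurableSet_Ici (by fun_prop),
    setLIntegral_congr_fun measurableSet_Ici fun s (hs : c ≤ s) ↦
      lintegral_orthogonal_norm_smul_add_rpow he (by linarith) (hc.trans_le hs)]
  simp_rw [ENNReal.ofReal_mul hconst]
  rw [lintegral_const_mul' _ _ ENNReal.ofReal_ne_top, lintegral_Ici_rpow (by linarith) hc,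
    ← ENNReal.ofReal_mul (by positivity), show -1 - α + 1 = -α by ring, neg_div_neg_eq]
  congr 1
  ring

theorem setIntegral_norm_rpow_le_inner {e : E} (he : ‖e‖ = 1) {α c : ℝ} (hα : 0 < α)
    (hc : 0 < c) :
    ∫ z in {z | c ≤ ⟪e, z⟫}, ‖z‖ ^ (-(finrank ℝ E : ℝ) - α) =
      1 / α * hyperplaneKernelConst (finrank ℝ E) α * c ^ (-α) := by
  have hconst : 0 ≤ hyperplaneKernelConst (finrank ℝ E) α :=
    hyperplaneKernelConst_nonneg (by positivity) (by positivity)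
  rw [integral_eq_lintegral_of_nonneg_ae (ae_of_all _ fun _ ↦ rpow_nonneg (norm_nonneg _) _)
      (measurable_norm.pow_const _).aestronglyMeasurable,
    setLIntegral_norm_rpow_le_inner he hα hc, ENNReal.toReal_ofReal (by positivity)]

theorem setIntegral_inner_nonpos_comp_sub_left {F : Type*} [NormedAddCommGroup F] [NormedSpace ℝ F]
    (e x : E) (f : E → F) :
    ∫ y in {y | ⟪e, y⟫ ≤ 0}, f (x - y) = ∫ z in {z | ⟪e, x⟫ ≤ ⟪e, z⟫}, f z := by
  have hpre : {y | ⟪e, y⟫ ≤ 0} = (x - ·) ⁻¹' {z | ⟪e, x⟫ ≤ ⟪e, z⟫} := by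
    ext y
    simp [inner_sub_right]
  rw [hpre, (Measure.measurePreserving_sub_left volume x).setIntegral_preimage_emb
    (MeasurableEquiv.subLeft x).measurableEmbedding]

theorem killing_density_halfspace_general {e x : E} (he : ‖e‖ = 1) {α : ℝ} (hα : 0 < α)
    (hx : 0 < ⟪e, x⟫) :
    ∫ y in {y | ⟪e, y⟫ ≤ 0}, ‖x - y‖ ^ (-(finrank ℝ E : ℝ) - α) =
      (1 / α) * (π ^ (((finrank ℝ E : ℝ) - 1) / 2) * Gamma ((1 + α) / 2) /
        Gamma ((α + finrank ℝ E) / 2)) * ⟪e, x⟫ ^ (-α) := by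
  rw [setIntegral_inner_nonpos_comp_sub_left e x fun z ↦ ‖z‖ ^ (-(finrank ℝ E : ℝ) - α),
    setIntegral_norm_rpow_le_inner he hα hx, hyperplaneKernelConst]

end InnerProductSpace

theorem killing_density_halfspace (d : ℕ) (α : ℝ) (hα0 : 0 < α) (hα2 : α < 2)
    (x : EuclideanSpace ℝ (Fin (d + 1))) (hx : x ∈ halfSpace d) :
    (∫ y in (halfSpace d)ᶜ, ‖x - y‖ ^ (-((d : ℝ) + 1) - α)) =
      (1 / α) * (Real.pi ^ ((((d : ℝ) + 1) - 1) / 2) * Real.Gamma ((1 + α) / 2) /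
          Real.Gamma ((α + ((d : ℝ) + 1)) / 2)) *
        x (Fin.last d) ^ (-α) := by
  simpa [halfSpace, compl_ofPred, EuclideanSpace.inner_single_left] using
    killing_density_halfspace_general (e := EuclideanSpace.single (Fin.last d) (1 : ℝ)) (x := x)
      (by simp) hα0 (by simpa [EuclideanSpace.inner_single_left] using! hx)
end
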